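/- Let Q(x,y) = a x² + b x y + c y² be a primitive, positive definite, integral binary quadratic form (a, b, c ∈ ℤ, gcd(a,b,c) = 1, a > 0, b² − 4ac < 0). Then there exists a prime number p and integers x, y with Q(x, y) = p. -/

import Mathlib

section FileP1
open Real

/-- one-dimensional shifted Gaussian sum: summability -/
lemma gauss1_summable {A : ℝ} (hA : 0 < A) (r : ℝ) :
    Summable (fun n : ℤ => rexp (-(A * (n + r) ^ 2))) := by
  have h := summable_pow_mul_jacobiTheta₂_term_bound (|r| * A / π) (T := A / π) (by positivity) 0
  refine Summable.of_nonneg_of_le (fun _ => (exp_pos _).le) (fun n => ?_) h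
  simp only [pow_zero, Int.cast_abs, one_mul]
  rw [Real.exp_le_exp]
  have h1 : -π * (A / π * (n:ℝ) ^ 2 - 2 * (|r| * A / π) * |(n:ℝ)|) = -(A * n^2) + 2 * |r| * A * |(n:ℝ)| := by
    field_simp
    ring
  have h2 : - ((n:ℝ) * r) ≤ |(n:ℝ)| * |r| := by rw [← abs_mul]; exact neg_le_abs _
  rw [h1]
  nlinarith [mul_le_mul_of_nonneg_left h2 hA.le, mul_nonneg hA.le (sq_nonneg r)]

/-- Poisson, first form -/
lemma gauss1_poisson {A : ℝ} (hA : 0 < A) (r : ℝ) :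
    ((∑' n : ℤ, rexp (-(A * (n + r) ^ 2)) : ℝ) : ℂ) = (√(π / A) : ℝ) *
      ∑' n : ℤ, Complex.exp (((-(π ^ 2 / A * n ^ 2) : ℝ) : ℂ) + ((-2 * π * r * n : ℝ) : ℂ) * Complex.I) := by
  have hpA : 0 < π / A := by positivity
  have h := Complex.tsum_exp_neg_quadratic (a := ((π / A : ℝ) : ℂ))
    (by rw [Complex.ofReal_re]; positivity) (-(Complex.I * r))
  have hAc : (A : ℂ) ≠ 0 := by exact_mod_cast hA.ne'
  have hpc : (π : ℂ) ≠ 0 := by exact_mod_cast pi_pos.ne'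
  have e1 : ∀ n : ℤ, (-π * ((π / A : ℝ) : ℂ) * n ^ 2 + 2 * π * (-(Complex.I * r)) * n) =
    (((-(π ^ 2 / A * n ^ 2) : ℝ) : ℂ) + ((-2 * π * r * n : ℝ) : ℂ) * Complex.I) := by
    intro n; push_cast; field_simp
  have e2 : ∀ n : ℤ, (-π / ((π / A : ℝ) : ℂ) * (n + Complex.I * (-(Complex.I * r))) ^ 2) =
    ((-(A * (n + r) ^ 2) : ℝ) : ℂ) := by
    intro n; push_cast
    have : (Complex.I * (-(Complex.I * r))) = r := by
      rw [mul_neg, ← mul_assoc, Complex.I_mul_I]; ring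
    rw [this]; field_simp
  simp_rw [e1, e2] at h
  rw [h]
  have e3 : (((π / A : ℝ) : ℂ) ^ (1 / 2 : ℂ)) = ((√(π / A) : ℝ) : ℂ) := by
    rw [Real.sqrt_eq_rpow, Complex.ofReal_cpow hpA.le]; norm_num
  rw [e3]
  have : ((√(π / A) : ℝ) : ℂ) ≠ 0 := by exact_mod_cast (Real.sqrt_pos.2 hpA).ne'
  rw [← mul_assoc, mul_one_div_cancel this, one_mul]
  push_cast
  rfl

lemma gauss_dual_bound {A : ℝ} (hA : 0 < A) (N : ℕ) (hN : 1 ≤ N) (n : ℤ) (hn : n ≠ 0) :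
    rexp (-(π ^ 2 / A * n ^ 2)) ≤ (N.factorial * A ^ N) * (1 / (n : ℝ) ^ 2) := by
  have hn1 : (1 : ℝ) ≤ (n:ℝ) ^ 2 := by
    have : 1 ≤ n ^ 2 := by have := sq_pos_of_ne_zero hn; omega
    exact_mod_cast this
  have hx : (0 : ℝ) < n ^ 2 / A := by positivity
  have hpi : (1 : ℝ) ≤ π ^ 2 := by nlinarith [pi_gt_three]
  have h1 : rexp (-(π ^ 2 / A * n ^ 2)) ≤ rexp (-(n ^ 2 / A)) := by
    rw [Real.exp_le_exp]
    have : π ^ 2 / A * (n:ℝ) ^ 2 = π ^ 2 * (n ^ 2 / A) := by ring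
    rw [this]; nlinarith
  have h2 := Real.pow_div_factorial_le_exp (n ^ 2 / A) hx.le N
  have h3 : rexp (-(n ^ 2 / A)) ≤ (((n:ℝ) ^ 2 / A) ^ N / N.factorial)⁻¹ := by
    rw [Real.exp_neg]
    exact inv_anti₀ (by positivity) h2
  refine h1.trans (h3.trans ?_)
  rw [div_pow, inv_div, div_div_eq_mul_div, mul_one_div]
  apply div_le_div_of_nonneg_left (by positivity) (by positivity)
  exact le_self_pow₀ hn1 (by omega)

lemma gauss1_asymp {A : ℝ} (hA : 0 < A) (N : ℕ) : ∃ C : ℝ, 0 ≤ C ∧ ∀ t : ℝ, 0 < t → t ≤ 1 → ∀ r : ℝ,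
    |(∑' n : ℤ, rexp (-(t * A * (n + r) ^ 2))) - √(π / (t * A))| ≤ C * t ^ N := by
  have hs2 : Summable (fun n : ℤ => 1 / (n:ℝ) ^ 2) := by
    have := (Real.summable_one_div_int_pow (p := 2)).2 (by norm_num)
    simpa using this
  set Z := ∑' n : ℤ, 1 / (n:ℝ) ^ 2 with hZ
  have hZ0 : 0 ≤ Z := tsum_nonneg fun n => by positivity
  refine ⟨√(π / A) * (((N+1).factorial * A ^ (N+1)) * Z), by positivity, fun t ht ht1 r => ?_⟩
  have htA : 0 < t * A := by positivity
  set f : ℤ → ℂ := fun n => Complex.exp (((-(π ^ 2 / (t * A) * n ^ 2) : ℝ) : ℂ) + ((-2 * π * r * n : ℝ) : ℂ) * Complex.I) with hf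
  have hfn : ∀ n, ‖f n‖ = rexp (-(π ^ 2 / (t * A) * n ^ 2)) := by
    intro n
    rw [hf, Complex.norm_exp]
    congr 1
    rw [Complex.add_re, Complex.ofReal_re, Complex.re_ofReal_mul, Complex.I_re, mul_zero, add_zero]
  have hb : ∀ n : ℤ, ‖if n = 0 then (0:ℂ) else f n‖ ≤ ((N+1).factorial * (t * A) ^ (N+1)) * (1 / (n : ℝ) ^ 2) := by
    intro n
    split_ifs with h
    · simp [h]
    · rw [hfn]; exact gauss_dual_bound htA (N+1) (by omega) n h
  have hsum0 : Summable (fun n : ℤ => if n = 0 then (0:ℂ) else f n) :=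
    Summable.of_norm_bounded (hs2.mul_left _) hb
  have hsum : Summable f := by
    have := (hasSum_ite_eq (0:ℤ) (f 0)).summable.add hsum0
    refine this.congr (fun n => ?_)
    by_cases h : n = 0 <;> simp [h]
  have h0 : ∑' n, f n = 1 + ∑' n, (if n = 0 then (0:ℂ) else f n) := by
    rw [hsum.tsum_eq_add_tsum_ite 0]
    congr 1
    simp [hf]
  have hP := gauss1_poisson htA r
  have hdiff : (((∑' n : ℤ, rexp (-(t * A * (n + r) ^ 2))) - √(π / (t * A)) : ℝ) : ℂ) =
      (√(π / (t * A)) : ℝ) * ∑' n, (if n = 0 then (0:ℂ) else f n) := by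
    rw [Complex.ofReal_sub, hP, h0]; ring
  rw [← Real.norm_eq_abs, ← Complex.norm_real, hdiff, norm_mul, Complex.norm_real, Real.norm_eq_abs,
    abs_of_nonneg (Real.sqrt_nonneg _)]
  have h3 : ‖∑' n, (if n = 0 then (0:ℂ) else f n)‖ ≤ ((N+1).factorial * (t * A) ^ (N+1)) * Z := by
    have := tsum_of_norm_bounded (hs2.mul_left ((N+1).factorial * (t * A) ^ (N+1) : ℝ)).hasSum hb
    rwa [tsum_mul_left] at this
  have h4 : √(π / (t * A)) * t ≤ √(π / A) := by
    rw [show π / (t * A) = (π / A) / t by field_simp, Real.sqrt_div (by positivity)]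
    rw [div_mul_eq_mul_div, div_le_iff₀ (by positivity)]
    apply mul_le_mul_of_nonneg_left _ (by positivity)
    exact Real.le_sqrt_of_sq_le (by nlinarith)
  calc √(π / (t * A)) * _ ≤ √(π / (t * A)) * (((N+1).factorial * (t * A) ^ (N+1)) * Z) := by gcongr
    _ = (√(π / (t * A)) * t) * (((N+1).factorial * A ^ (N+1)) * Z) * t ^ N := by rw [mul_pow]; ring
    _ ≤ _ := by gcongr

end FileP1

section FileP1b
open Real

lemma gauss1_bdd {A : ℝ} (hA : 0 < A) : ∃ C : ℝ, 0 ≤ C ∧ ∀ r : ℝ,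
    (∑' n : ℤ, rexp (-(A * (n + r) ^ 2))) ≤ C := by
  obtain ⟨C, hC, h⟩ := gauss1_asymp hA 0
  refine ⟨C + √(π / A), by positivity, fun r => ?_⟩
  have := (abs_le.1 (h 1 one_pos le_rfl r)).2
  simp only [one_mul, one_pow, mul_one] at this
  linarith

lemma gauss2_summable {A B : ℝ} (hA : 0 < A) (hB : 0 < B) (s r q : ℝ) :
    Summable (fun p : ℤ × ℤ => rexp (-(A * (p.2 + (s * p.1 + r)) ^ 2 + B * (p.1 + q) ^ 2))) := by
  rw [summable_prod_of_nonneg (fun p => (exp_pos _).le)]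
  have e : ∀ y x : ℤ, rexp (-(A * (x + (s * y + r)) ^ 2 + B * (y + q) ^ 2)) =
    rexp (-(B * (y + q) ^ 2)) * rexp (-(A * (x + (s * y + r)) ^ 2)) := by
    intro y x; rw [← Real.exp_add]; ring_nf
  simp_rw [e]
  refine ⟨fun y => (gauss1_summable hA _).mul_left _, ?_⟩
  simp_rw [tsum_mul_left]
  obtain ⟨C, hC, h⟩ := gauss1_bdd hA
  refine Summable.of_nonneg_of_le (fun y => ?_) (fun y => ?_) ((gauss1_summable hB q).mul_right C)
  · exact mul_nonneg (exp_pos _).le (tsum_nonneg fun _ => (exp_pos _).le)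
  · exact mul_le_mul_of_nonneg_left (h _) (exp_pos _).le

lemma gauss2_asymp {A B : ℝ} (hA : 0 < A) (hB : 0 < B) (N : ℕ) : ∃ C : ℝ, 0 ≤ C ∧
    ∀ t : ℝ, 0 < t → t ≤ 1 → ∀ s r q : ℝ,
    |(∑' p : ℤ × ℤ, rexp (-(t * A * (p.2 + (s * p.1 + r)) ^ 2 + t * B * (p.1 + q) ^ 2)))
      - √(π / A) * √(π / B) / t| ≤ C * t ^ N := by
  obtain ⟨C1, hC1, h1⟩ := gauss1_asymp hA (N + 1)
  obtain ⟨C2, hC2, h2⟩ := gauss1_asymp hB (N + 1)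
  set a := √(π / A) with ha
  set b := √(π / B) with hb
  have ha0 : 0 ≤ a := Real.sqrt_nonneg _
  have hb0 : 0 ≤ b := Real.sqrt_nonneg _
  refine ⟨C1 * (b + C2) + a * C2, by positivity, fun t ht ht1 s r q => ?_⟩
  have htA : 0 < t * A := by positivity
  have htB : 0 < t * B := by positivity
  have hsq : 0 < √t := Real.sqrt_pos.2 ht
  have hsq1 : √t ≤ 1 := Real.sqrt_le_one.2 ht1 
  have hss : √t * √t = t := Real.mul_self_sqrt ht.le
  have eA : √(π / (t * A)) = a / √t := by
    rw [show π / (t * A) = (π / A) / t by field_simp, Real.sqrt_div (by positivity)]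
  have eB : √(π / (t * B)) = b / √t := by
    rw [show π / (t * B) = (π / B) / t by field_simp, Real.sqrt_div (by positivity)]
  have e : ∀ y x : ℤ, rexp (-(t * A * (x + (s * y + r)) ^ 2 + t * B * (y + q) ^ 2)) =
    rexp (-(t * B * (y + q) ^ 2)) * rexp (-(t * A * (x + (s * y + r)) ^ 2)) := by
    intro y x; rw [← Real.exp_add]; ring_nf
  have hS := gauss2_summable htA htB s r q
  rw [hS.tsum_prod]
  simp_rw [e, tsum_mul_left]
  set S : ℤ → ℝ := fun y => ∑' x : ℤ, rexp (-(t * A * (x + (s * y + r)) ^ 2)) with hSdef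
  set g : ℤ → ℝ := fun y => rexp (-(t * B * (y + q) ^ 2)) with hg
  have hgs : Summable g := gauss1_summable htB q
  have hg0 : ∀ y, 0 ≤ g y := fun y => (exp_pos _).le
  have hSb : ∀ y, |S y - a / √t| ≤ C1 * t ^ (N + 1) := fun y => by
    have := h1 t ht ht1 (s * y + r); rwa [eA] at this
  have hG := h2 t ht ht1 q
  rw [eB] at hG
  change |(∑' y, g y) - b / √t| ≤ _ at hG
  have hbd : ∀ y, ‖g y * (S y - a / √t)‖ ≤ g y * (C1 * t ^ (N+1)) := fun y => by
    rw [norm_mul, Real.norm_eq_abs, Real.norm_eq_abs, abs_of_nonneg (hg0 y)]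
    exact mul_le_mul_of_nonneg_left (hSb y) (hg0 y)
  have hs1 : Summable (fun y => g y * (S y - a / √t)) :=
    Summable.of_norm_bounded (hgs.mul_right _) hbd
  have hsplit : ∑' y, g y * S y = (∑' y, g y * (S y - a / √t)) + (∑' y, g y) * (a / √t) := by
    rw [← tsum_mul_right, ← hs1.tsum_add (hgs.mul_right _)]
    congr 1; ext y; ring
  have hE : |∑' y, g y * (S y - a / √t)| ≤ (∑' y, g y) * (C1 * t ^ (N+1)) := by
    have := tsum_of_norm_bounded (hgs.mul_right (C1 * t ^ (N+1))).hasSum hbd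
    rwa [tsum_mul_right, Real.norm_eq_abs] at this
  have htN : 0 ≤ t ^ N := by positivity
  have htN1 : t ^ N ≤ 1 := pow_le_one₀ ht.le ht1
  have hGle : (∑' y, g y) * t ≤ b + C2 := by
    have h3 := (abs_le.1 hG).2
    have h4 : (∑' y, g y) ≤ b / √t + C2 * t ^ (N+1) := by linarith
    have h5 : b / √t * t = b * √t := by rw [div_mul_eq_mul_div, div_eq_iff hsq.ne']; nlinarith
    calc (∑' y, g y) * t ≤ (b / √t + C2 * t ^ (N+1)) * t := by gcongr
      _ = b * √t + C2 * (t ^ N * t * t) := by rw [add_mul, h5]; ring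
      _ ≤ b * 1 + C2 * (1 * 1 * 1) := by gcongr
      _ = _ := by ring
  rw [hsplit]
  have h6 : a * b / t = b / √t * (a / √t) := by
    rw [div_mul_div_comm, hss]; ring
  have h7 : a / √t * t ≤ a := by
    rw [div_mul_eq_mul_div, div_le_iff₀ hsq]
    apply mul_le_mul_of_nonneg_left _ ha0
    nlinarith
  have h8 : |(∑' y, g y) * (a / √t) - b / √t * (a / √t)| ≤ a * C2 * t ^ N := by
    rw [← sub_mul, abs_mul, abs_of_nonneg (by positivity : 0 ≤ a / √t)]
    calc _ ≤ C2 * t ^ (N+1) * (a / √t) := by gcongr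
      _ = C2 * t ^ N * (a / √t * t) := by ring
      _ ≤ C2 * t ^ N * a := by gcongr
      _ = _ := by ring
  rw [h6, add_sub_assoc]
  refine (abs_add_le _ _).trans ?_
  have h9 : (∑' y, g y) * (C1 * t ^ (N+1)) ≤ C1 * (b + C2) * t ^ N := by
    calc _ = ((∑' y, g y) * t) * (C1 * t ^ N) := by ring
      _ ≤ (b + C2) * (C1 * t ^ N) := by gcongr
      _ = _ := by ring
  calc _ ≤ C1 * (b + C2) * t ^ N + a * C2 * t ^ N := add_le_add (hE.trans h9) h8
    _ = _ := by ring

/-- theta series of a shifted planar lattice -/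
lemma lattice_theta {u v : ℂ} (hu : u ≠ 0) (huv : (v / u).im ≠ 0) :
    (∀ (β : ℂ) (t : ℝ), 0 < t →
      Summable (fun p : ℤ × ℤ => rexp (-(t * ‖β + p.2 * u + p.1 * v‖ ^ 2)))) ∧
    ∃ κ : ℝ, 0 < κ ∧ ∀ N : ℕ, ∃ C : ℝ, 0 ≤ C ∧ ∀ t : ℝ, 0 < t → t ≤ 1 → ∀ β : ℂ,
      |(∑' p : ℤ × ℤ, rexp (-(t * ‖β + p.2 * u + p.1 * v‖ ^ 2))) - κ / t| ≤ C * t ^ N := by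
  set s := (v / u).re with hs
  set τ := (v / u).im with hτ
  set A := ‖u‖ ^ 2 with hA
  have hA0 : 0 < A := by have := norm_pos_iff.2 hu; positivity
  have hB0 : 0 < A * τ ^ 2 := by positivity
  have key : ∀ (β : ℂ) (t : ℝ) (p : ℤ × ℤ), rexp (-(t * ‖β + p.2 * u + p.1 * v‖ ^ 2)) =
      rexp (-(t * A * (p.2 + (s * p.1 + (β / u).re)) ^ 2 + t * (A * τ ^ 2) * (p.1 + (β / u).im / τ) ^ 2)) := by
    intro β t p
    congr 1
    have h1 : β + p.2 * u + p.1 * v = u * (β / u + p.2 + p.1 * (v / u)) := by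
      field_simp
    rw [h1, norm_mul, mul_pow, Complex.sq_norm (_ + _), Complex.normSq_apply]
    simp only [Complex.add_re, Complex.add_im, Complex.mul_re, Complex.mul_im, Complex.intCast_re,
      Complex.intCast_im, zero_mul, sub_zero, add_zero]
    rw [← hs, ← hτ, ← hA]
    field_simp
    ring
  refine ⟨fun β t ht => ?_, √(π / A) * √(π / (A * τ ^ 2)), by positivity, fun N => ?_⟩
  · simp_rw [key]
    exact gauss2_summable (by positivity) (by positivity) _ _ _
  · obtain ⟨C, hC, h⟩ := gauss2_asymp hA0 hB0 N
    refine ⟨C, hC, fun t ht ht1 β => ?_⟩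
    simp_rw [key]
    exact h t ht ht1 _ _ _

end FileP1b

section FileP2a
open Real Set Filter Topology MeasureTheory Asymptotics

lemma mellin_entire {a : ℕ → ℂ} (ha0 : a 0 = 0)
    (hsum : ∀ t : ℝ, 0 < t → Summable (fun n : ℕ => ‖a n‖ * rexp (-(n * t)))) (c : ℂ)
    (has : ∀ N : ℕ, ∃ C : ℝ, ∀ t : ℝ, 0 < t → t ≤ 1 →
      ‖(∑' n : ℕ, a n * rexp (-(n * t)) : ℂ) - c / t‖ ≤ C * t ^ N)
    (hL : ∀ s : ℂ, 1 < s.re → LSeriesSummable a s) :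
    ∃ H : ℂ → ℂ, Differentiable ℂ H ∧ ∀ s : ℂ, 1 < s.re →
      LSeries a s = (H s + c / (s - 1)) * (Complex.Gamma s)⁻¹ := by
  set θ : ℝ → ℂ := fun t => ∑' n : ℕ, a n * rexp (-(n * t)) with hθ
  set g : ℝ → ℂ := fun t => c * (indicator (Ioc 0 1) (fun t : ℝ => (t : ℂ) ^ (-1 : ℂ)) t) with hg
  have hnorm : ∀ (t : ℝ) (n : ℕ), ‖a n * rexp (-(n * t))‖ = ‖a n‖ * rexp (-(n * t)) := by
    intro t n
    rw [norm_mul, Complex.norm_real, Real.norm_eq_abs, abs_of_pos (exp_pos _)]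
  have hsumc : ∀ t : ℝ, 0 < t → Summable (fun n : ℕ => a n * (rexp (-(n * t)) : ℂ)) := by
    intro t ht
    apply Summable.of_norm
    simp_rw [hnorm]; exact hsum t ht
  have hcont : ContinuousOn θ (Ioi 0) := by
    intro t ht
    have ht0 : (0:ℝ) < t := ht
    have h1 : ContinuousOn θ (Ioi (t/2)) := by
      refine continuousOn_tsum (u := fun n : ℕ => ‖a n‖ * rexp (-(n * (t/2)))) (fun n => ?_) (hsum _ (by linarith)) (fun n x hx => ?_)
      · fun_prop
      · rw [hnorm]
        have : t / 2 < x := hx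
        gcongr
    exact (h1.continuousAt (Ioi_mem_nhds (by linarith))).continuousWithinAt
  have hgc : LocallyIntegrableOn g (Ioi 0) := by
    have h1 : ContinuousOn (fun t : ℝ => c * (t : ℂ) ^ (-1 : ℂ)) (Ioi 0) := by
      intro t ht
      apply ContinuousAt.continuousWithinAt
      exact continuousAt_const.mul (Complex.continuousAt_ofReal_cpow_const _ _ (Or.inr (ne_of_gt ht)))
    have h2 := h1.locallyIntegrableOn (μ := volume) measurableSet_Ioi
    have h3 : g = indicator (Ioc 0 1) (fun t : ℝ => c * (t : ℂ) ^ (-1 : ℂ)) := by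
      ext t; simp only [hg, indicator]; split_ifs <;> simp
    rw [h3]
    intro x hx
    obtain ⟨U, hU, hi⟩ := h2 x hx
    exact ⟨U, hU, hi.indicator measurableSet_Ioc⟩
  have hfl : LocallyIntegrableOn (fun t => θ t - g t) (Ioi 0) :=
    (hcont.locallyIntegrableOn measurableSet_Ioi).sub hgc
  have htop : (fun t => θ t - g t) =O[atTop] fun t => rexp (-1 * t) := by
    refine IsBigO.of_bound ((∑' n : ℕ, ‖a n‖ * rexp (-(n * 1))) * rexp 1) ?_
    filter_upwards [eventually_gt_atTop 1] with t ht
    have hg0 : g t = 0 := by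
      simp only [hg]
      rw [indicator_of_notMem (fun h => absurd h.2 (not_le.2 ht)), mul_zero]
    rw [hg0, sub_zero, Real.norm_eq_abs, abs_of_pos (exp_pos _)]
    have := tsum_of_norm_bounded (f := fun n : ℕ => a n * (rexp (-(n * t)) : ℂ)) (((hsum 1 one_pos).mul_right (rexp 1 * rexp (-1 * t))).hasSum) ?_
    · rw [tsum_mul_right] at this
      rw [mul_assoc]; exact this
    · intro n
      rw [hnorm]
      rcases Nat.eq_zero_or_pos n with h | h
      · simp [h, ha0]
      · rw [mul_assoc]
        apply mul_le_mul_of_nonneg_left _ (norm_nonneg _)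
        rw [← Real.exp_add, ← Real.exp_add, Real.exp_le_exp]
        have : (1:ℝ) ≤ n := by exact_mod_cast h
        nlinarith
  have hbot : ∀ b : ℝ, (fun t => θ t - g t) =O[𝓝[>] 0] (fun t : ℝ => t ^ (-b)) := by
    intro b
    obtain ⟨N, hN⟩ := exists_nat_ge (-b)
    obtain ⟨C, hC⟩ := has N
    refine IsBigO.of_bound |C| ?_
    have : Ioc (0:ℝ) 1 ∈ 𝓝[>] (0:ℝ) := Ioc_mem_nhdsGT one_pos
    filter_upwards [this] with t ht
    have hg1 : g t = c / t := by
      simp only [hg]; rw [indicator_of_mem ht, Complex.cpow_neg_one]; rfl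
    rw [hg1, Real.norm_eq_abs, abs_of_nonneg (rpow_nonneg ht.1.le _)]
    refine (hC t ht.1 ht.2).trans ?_
    have : t ^ N ≤ t ^ (-b) := by
      rw [← Real.rpow_natCast]
      exact Real.rpow_le_rpow_of_exponent_ge ht.1 ht.2 hN
    calc C * t ^ N ≤ |C| * t ^ N := by have := ht.1; gcongr; exact le_abs_self C
      _ ≤ _ := by gcongr
  refine ⟨mellin (fun t => θ t - g t), fun s => ?_, fun s hs => ?_⟩
  · exact mellin_differentiableAt_of_isBigO_rpow_exp (a := 1) (b := s.re - 1) one_pos hfl htop (hbot _) (by linarith)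
  · have hm1 : MellinConvergent (fun t => θ t - g t) s :=
      mellinConvergent_of_isBigO_rpow_exp (a := 1) (b := s.re - 1) one_pos hfl htop (hbot _) (by linarith)
    have hm2 := hasMellin_cpow_Ioc (-1) (s := s) (by simp; linarith)
    have hm3 := hasMellin_const_smul hm2.1 c
    have hm4 := hasMellin_add hm1 hm3.1
    have hm5 : mellin θ s = mellin (fun t => θ t - g t) s + c / (s - 1) := by
      have := hm4.2
      rw [hm3.2, hm2.2] at this
      rw [show (c / (s - 1)) = c • (1 / (s + -1)) by rw [smul_eq_mul, mul_one_div, sub_eq_add_neg]]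
      rw [← this]
      congr 1
      ext t
      simp [hg, smul_eq_mul]
    have hGam : Complex.Gamma s ≠ 0 := Complex.Gamma_ne_zero_of_re_pos (by linarith)
    have hls : Summable fun n : ℕ => ‖a n‖ / (n:ℝ) ^ s.re := by
      have := (hL s hs).norm
      refine this.congr (fun n => ?_)
      rw [LSeries.norm_term_eq]
      split_ifs with h
      · simp [h, ha0]
      · rfl
    have h6 := hasSum_mellin (a := a) (p := fun n : ℕ => (n : ℝ)) (F := θ) (s := s)
      (fun n => by rcases Nat.eq_zero_or_pos n with h | h
                   · left; simp [h, ha0]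
                   · right; exact_mod_cast h) (by linarith)
      (fun t ht => by
        have := (hsumc t ht).hasSum
        simpa only [neg_mul] using this) hls
    rw [← hm5, ← h6.tsum_eq]
    rw [LSeries, ← tsum_mul_right]
    congr 1
    ext n
    rw [LSeries.term_def]
    split_ifs with h
    · simp [h, ha0]
    · simp only [Complex.ofReal_natCast]
      field_simp

end FileP2a

section FileP2b
open Real Set Filter Topology MeasureTheory Asymptotics

lemma mulChar_sum_chars {G : Type*} [CommGroup G] [Finite G] [Fintype (MulChar G ℂ)] {a : G} (ha : a ≠ 1) :
    ∑ χ : MulChar G ℂ, χ a = 0 := by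
  obtain ⟨χ, hχ⟩ := MulChar.exists_apply_ne_one_of_hasEnoughRootsOfUnity G ℂ ha
  have h : χ a * ∑ ψ : MulChar G ℂ, ψ a = ∑ ψ : MulChar G ℂ, ψ a := by
    rw [Finset.mul_sum]
    rw [← Equiv.sum_comp (Equiv.mulLeft χ) (fun ψ : MulChar G ℂ => ψ a)]
    rfl
  have : (χ a - 1) * ∑ ψ : MulChar G ℂ, ψ a = 0 := by rw [sub_mul, h]; ring
  exact (mul_eq_zero.1 this).resolve_left (sub_ne_zero.2 hχ)

/-- multiplication by `log` on arithmetic functions -/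
noncomputable def logD (f : ArithmeticFunction ℂ) : ArithmeticFunction ℂ :=
  ⟨fun n => f n * Real.log n, by simp⟩

lemma logD_apply (f : ArithmeticFunction ℂ) (n : ℕ) : logD f n = f n * Real.log n := rfl

lemma logD_mul (f g : ArithmeticFunction ℂ) : logD (f * g) = logD f * g + f * logD g := by
  ext n
  rw [logD_apply, ArithmeticFunction.add_apply, ArithmeticFunction.mul_apply,
    ArithmeticFunction.mul_apply, ArithmeticFunction.mul_apply, Finset.sum_mul, ← Finset.sum_add_distrib]
  refine Finset.sum_congr rfl fun p hp => ?_
  obtain ⟨h1, h2⟩ := Nat.mem_divisorsAntidiagonal.1 hp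
  have hp1 : (p.1 : ℝ) ≠ 0 := by
    rintro h; apply h2; rw [← h1]; have : p.1 = 0 := by exact_mod_cast h
    simp [this]
  have hp2 : (p.2 : ℝ) ≠ 0 := by
    rintro h; apply h2; rw [← h1]; have : p.2 = 0 := by exact_mod_cast h
    simp [this]
  rw [← h1, Nat.cast_mul, Real.log_mul hp1 hp2, logD_apply, logD_apply]
  push_cast; ring

lemma logD_prod {ι : Type*} (s : Finset ι) (f g : ι → ArithmeticFunction ℂ)
    (h : ∀ i ∈ s, logD (f i) = f i * g i) :
    logD (∏ i ∈ s, f i) = (∏ i ∈ s, f i) * ∑ i ∈ s, g i := by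
  classical
  induction s using Finset.induction_on with
  | empty =>
    simp only [Finset.prod_empty, Finset.sum_empty, mul_zero]
    ext n
    rw [logD_apply, ArithmeticFunction.one_apply]
    split_ifs with hn <;> simp [hn]
  | insert a s ha ih =>
    rw [Finset.prod_insert ha, Finset.sum_insert ha, logD_mul, h a (Finset.mem_insert_self _ _),
      ih fun i hi => h i (Finset.mem_insert_of_mem hi)]
    ring

open scoped ComplexOrder in
lemma nonneg_of_logD {b g : ArithmeticFunction ℂ} (h : logD b = b * g) (h1 : b 1 = 1)
    (hg : ∀ n, 0 ≤ g n) (hg1 : g 1 = 0) (n : ℕ) : 0 ≤ b n := by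
  induction n using Nat.strong_induction_on with
  | _ n ih =>
    rcases Nat.lt_or_ge n 2 with hn | hn
    · interval_cases n
      · simp
      · simp [h1]
    · have h2 := congrArg (fun f => f n) h
      simp only [logD_apply, ArithmeticFunction.mul_apply] at h2
      have h3 : 0 ≤ b n * (Real.log n : ℂ) := by
        rw [h2]
        refine Finset.sum_nonneg fun p hp => ?_
        obtain ⟨e1, e2⟩ := Nat.mem_divisorsAntidiagonal.1 hp
        by_cases hp2 : p.2 = 1
        · rw [hp2, hg1, mul_zero]
        · refine mul_nonneg (ih _ ?_) (hg _)
          have hp0 : p.2 ≠ 0 := by rintro h0; apply e2; rw [← e1, h0, mul_zero]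
          have hp1 : p.1 ≠ 0 := by rintro h0; apply e2; rw [← e1, h0, zero_mul]
          rw [← e1]
          exact lt_mul_of_one_lt_right (by omega) (by omega)
      have hlog : 0 < Real.log n := Real.log_pos (by exact_mod_cast hn)
      have h4 : b n = (b n * (Real.log n : ℂ)) * ((Real.log n)⁻¹ : ℝ) := by
        have : (Real.log n : ℂ) ≠ 0 := by exact_mod_cast hlog.ne'
        rw [Complex.ofReal_inv, mul_assoc, mul_inv_cancel₀ this, mul_one]
      rw [h4]
      exact mul_nonneg h3 (by exact_mod_cast (inv_pos.2 hlog).le)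

lemma LSeries_prod {ι : Type*} (S : Finset ι) (f : ι → ArithmeticFunction ℂ) {s : ℂ}
    (h : ∀ i ∈ S, LSeriesSummable (fun n => f i n) s) :
    LSeriesSummable (fun n => (∏ i ∈ S, f i) n) s ∧
    LSeries (fun n => (∏ i ∈ S, f i) n) s = ∏ i ∈ S, LSeries (fun n => f i n) s := by
  classical
  induction S using Finset.induction_on with
  | empty =>
    simp only [Finset.prod_empty]
    have := ArithmeticFunction.one_eq_delta
    have hδ : LSeriesSummable LSeries.delta s := by
      refine summable_of_ne_finset_zero (s := {1}) fun n hn => ?_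
      have hn1 : n ≠ 1 := by simpa using hn
      rcases eq_or_ne n 0 with rfl | h0
      · simp
      · simp [LSeries.term_of_ne_zero h0, LSeries.delta, hn1]
    exact ⟨by rw [this]; exact hδ, by rw [this, LSeries_delta]; rfl⟩
  | insert a S ha ih =>
    obtain ⟨i1, i2⟩ := ih fun i hi => h i (Finset.mem_insert_of_mem hi)
    have h0 := h a (Finset.mem_insert_self _ _)
    rw [Finset.prod_insert ha, Finset.prod_insert ha]
    refine ⟨ArithmeticFunction.LSeriesSummable_mul h0 i1, ?_⟩
    rw [ArithmeticFunction.LSeries_mul' h0 i1, i2]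

lemma partial_sum_bound {r : ℕ → ℝ} (h0 : ∀ n, 0 ≤ r n)
    (hsum : ∀ t : ℝ, 0 < t → Summable (fun n : ℕ => r n * rexp (-(n * t)))) {κ : ℝ} 
    (has : ∃ C : ℝ, ∀ t : ℝ, 0 < t → t ≤ 1 →
      |(∑' n : ℕ, r n * rexp (-(n * t))) - κ / t| ≤ C) {s : ℂ} (hs : 1 < s.re) :
    LSeriesSummable (fun n => (r n : ℂ)) s := by
  obtain ⟨C, hC⟩ := has
  refine LSeriesSummable_of_sum_norm_bigO (r := 1) ?_ zero_le_one hs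
  refine IsBigO.of_bound (rexp 1 * (|κ| + |C|)) ?_
  filter_upwards [eventually_ge_atTop 1] with n hn
  have hn1 : (1:ℝ) ≤ n := by exact_mod_cast hn
  have hn0 : (0:ℝ) < n := by linarith
  rw [Real.rpow_one, Real.norm_eq_abs, Real.norm_eq_abs, abs_of_nonneg hn0.le,
    abs_of_nonneg (Finset.sum_nonneg fun _ _ => norm_nonneg _)]
  have ht : (0:ℝ) < 1 / n := by positivity
  have h1 := (abs_le.1 (hC (1/n) ht (by rw [div_le_one hn0]; exact hn1))).2
  have h2 : ∑ k ∈ Finset.Icc 1 n, r k * rexp (-(k * (1 / n))) ≤ ∑' k : ℕ, r k * rexp (-(k * (1/n))) :=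
    (hsum _ ht).sum_le_tsum _ fun i _ => mul_nonneg (h0 i) (exp_pos _).le
  have h3 : ∑ k ∈ Finset.Icc 1 n, ‖(r k : ℂ)‖ ≤ rexp 1 * ∑ k ∈ Finset.Icc 1 n, r k * rexp (-(k * (1 / n))) := by
    rw [Finset.mul_sum]
    refine Finset.sum_le_sum fun k hk => ?_
    rw [Complex.norm_real, Real.norm_eq_abs, abs_of_nonneg (h0 k)]
    have hk2 : (k:ℝ) ≤ n := by exact_mod_cast (Finset.mem_Icc.1 hk).2
    have : 1 ≤ rexp 1 * rexp (-(k * (1/n))) := by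
      rw [← Real.exp_add]
      apply Real.one_le_exp
      have : (k:ℝ) * (1/n) ≤ 1 := by rw [mul_one_div, div_le_one hn0]; exact hk2
      linarith
    nlinarith [h0 k]
  have h4 : ∑' k : ℕ, r k * rexp (-(k * (1/n))) ≤ (|κ| + |C|) * n := by
    have e : κ / (1 / n) = κ * n := by field_simp
    rw [e] at h1
    have : κ * n ≤ |κ| * n := by gcongr; exact le_abs_self _
    have : C ≤ |C| * n := (le_abs_self C).trans (le_mul_of_one_le_right (abs_nonneg _) hn1)
    linarith
  calc _ ≤ _ := h3
    _ ≤ rexp 1 * ((|κ| + |C|) * n) := by gcongr; exact h2.trans h4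
    _ = _ := by ring

end FileP2b

section FileP2c
open Real Set Filter Topology MeasureTheory Asymptotics

open scoped ComplexOrder in
lemma chars_nonvanish {X : Type*} [Fintype X] [DecidableEq X] (x0 : X)
    (f g : X → ArithmeticFunction ℂ) (E : X → ℂ → ℂ) (hE : ∀ x, Differentiable ℂ (E x))
    (hE0 : E x0 0 = 0)
    (h0 : ∀ s : ℂ, 1 < s.re → LSeries (fun n => f x0 n) s * (s - 1) = E x0 s)
    (h1 : ∀ x, x ≠ x0 → ∀ s : ℂ, 1 < s.re → LSeries (fun n => f x n) s = E x s)
    (hs : ∀ x, ∀ s : ℂ, 1 < s.re → LSeriesSummable (fun n => f x n) s)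
    (hl : ∀ x, logD (f x) = f x * g x) (hf1 : ∀ x, f x 1 = 1)
    (hg : ∀ n, 0 ≤ (∑ x, g x) n) (hg1 : (∑ x, g x) 1 = 0) (x : X) (hx : x ≠ x0) :
    E x 1 ≠ 0 := by
  intro hz
  set b : ArithmeticFunction ℂ := ∏ x, f x with hb
  have hb1 : b 1 = 1 := by
    have : ∀ S : Finset X, (∏ x ∈ S, f x) 1 = 1 := by
      intro S
      induction S using Finset.induction_on with
      | empty => simp
      | insert a S ha ih => rw [Finset.prod_insert ha, ArithmeticFunction.mul_apply]; simp [ih, hf1]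
    exact this _
  have hbl : logD b = b * ∑ x, g x := logD_prod _ _ _ fun i _ => hl i
  have hb0 : ∀ n, 0 ≤ b n := nonneg_of_logD hbl hb1 hg hg1
  have hdx : Differentiable ℂ (dslope (E x) 1) := by
    rw [← differentiableOn_univ, Complex.differentiableOn_dslope Filter.univ_mem]
    exact (hE x).differentiableOn
  let S : Finset X := (Finset.univ.erase x0).erase x
  let F : ℂ → ℂ := fun s => E x0 s * dslope (E x) 1 s * ∏ y ∈ S, E y s
  have hF : Differentiable ℂ F := ((hE x0).mul hdx).mul (Differentiable.fun_finsetProd fun y _ => hE y)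
  have hpos := LSeries.positive_of_differentiable_of_eqOn (a := fun n => b n) (fun n => hb0 n)
    (by rw [hb1]; exact zero_lt_one) hF (x := 1)
    (LSeries.abscissaOfAbsConv_le_of_forall_lt_LSeriesSummable fun y hy =>
      (LSeries_prod _ _ fun i _ => hs i _ (by simpa using hy)).1) (by
      intro s hs1
      have hs1 : 1 < s.re := hs1
      have hne : s ≠ 1 := by rintro rfl; simp at hs1
      rw [(LSeries_prod _ _ fun i _ => hs i _ hs1).2]
      rw [← Finset.mul_prod_erase Finset.univ _ (Finset.mem_univ x0),
        ← Finset.mul_prod_erase (Finset.univ.erase x0) _ (Finset.mem_erase.2 ⟨hx, Finset.mem_univ x⟩)]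
      have e1 : dslope (E x) 1 s = (s - 1)⁻¹ * LSeries (fun n => f x n) s := by
        rw [dslope_of_ne _ hne, slope_def_field, hz, h1 x hx s hs1, sub_zero, div_eq_inv_mul]
      have e2 : ∏ y ∈ S, E y s = ∏ y ∈ S, LSeries (fun n => f y n) s := by
        refine Finset.prod_congr rfl fun y hy => (h1 y ?_ s hs1).symm
        exact (Finset.mem_erase.1 (Finset.mem_erase.1 hy).2).1
      have hne' : s - 1 ≠ 0 := sub_ne_zero.2 hne
      simp only [F]
      rw [e1, e2, ← h0 s hs1]
      field_simp
      rfl) 0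
  have : F ((0:ℝ):ℂ) = 0 := by simp [F, hE0]
  rw [this] at hpos
  exact lt_irrefl _ hpos

lemma logderiv_tendsto (f g : ArithmeticFunction ℂ) (E : ℂ → ℂ) (hE : Differentiable ℂ E)
    (hE1 : E 1 ≠ 0) (k : ℕ) (h0 : ∀ s : ℂ, 1 < s.re → LSeries (fun n => f n) s * (s - 1) ^ k = E s)
    (hs : ∀ s : ℂ, 1 < s.re → LSeriesSummable (fun n => f n) s)
    (hsg : ∀ s : ℂ, 1 < s.re → LSeriesSummable (fun n => g n) s)
    (hl : logD f = f * g) :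
    Tendsto (fun x : ℝ => ((x:ℂ) - 1) * LSeries (fun n => g n) x) (𝓝[>] 1) (𝓝 k) := by
  have hab : LSeries.abscissaOfAbsConv (fun n => f n) ≤ 1 := by
    refine LSeries.abscissaOfAbsConv_le_of_forall_lt_LSeriesSummable fun y hy => hs _ (by simpa using hy)
  have hc : Tendsto (fun s : ℂ => (k : ℂ) - (s - 1) * deriv E s / E s) (𝓝 1) (𝓝 k) := by
    have hd : Continuous (deriv E) := hE.contDiff.continuous_deriv le_top
    have : ContinuousAt (fun s : ℂ => (k : ℂ) - (s - 1) * deriv E s / E s) 1 := by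
      refine continuousAt_const.sub (ContinuousAt.div ?_ hE.continuous.continuousAt hE1)
      exact ((continuous_id.sub continuous_const).mul hd).continuousAt
    simpa [ContinuousAt] using this
  have hc2 : Tendsto (fun x : ℝ => (k : ℂ) - ((x:ℂ) - 1) * deriv E x / E x) (𝓝[>] 1) (𝓝 k) := by
    refine hc.comp (Tendsto.mono_left ?_ nhdsWithin_le_nhds)
    exact_mod_cast (Complex.continuous_ofReal.tendsto 1)
  have hne : ∀ᶠ x : ℝ in 𝓝[>] 1, E x ≠ 0 := by
    have : Tendsto (fun x : ℝ => E x) (𝓝[>] 1) (𝓝 (E 1)) := by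
      refine Tendsto.mono_left ?_ nhdsWithin_le_nhds
      have := (hE.continuous.comp Complex.continuous_ofReal).tendsto 1
      simpa [Function.comp_def] using this
    exact this.eventually_ne hE1
  refine hc2.congr' ?_
  filter_upwards [hne, self_mem_nhdsWithin] with x hx hx1
  have hx1 : 1 < x := hx1
  have hre : 1 < (x:ℂ).re := by simpa using hx1
  have hLd := LSeries_hasDerivAt (f := fun n => f n) (s := (x:ℂ)) (hab.trans_lt (by exact_mod_cast hre))
  have hlm : LSeries (LSeries.logMul fun n => f n) x = LSeries (fun n => f n) x * LSeries (fun n => g n) x := by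
    rw [← ArithmeticFunction.LSeries_mul' (hs _ hre) (hsg _ hre), ← hl]
    congr 1
    ext n
    rw [logD_apply, LSeries.logMul, mul_comm, Complex.natCast_log]
  rw [hlm] at hLd
  have hpd : HasDerivAt (fun s : ℂ => (s - 1) ^ k) (k * ((x:ℂ) - 1) ^ (k - 1) * 1) x :=
    ((hasDerivAt_id (x:ℂ)).sub_const 1).pow k
  have hEd : HasDerivAt E _ (x:ℂ) := (hLd.mul hpd).congr_of_eventuallyEq (by
    have : {s : ℂ | 1 < s.re} ∈ 𝓝 (x:ℂ) := (isOpen_lt continuous_const Complex.continuous_re).mem_nhds hre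
    filter_upwards [this] with s hs
    exact (h0 s hs).symm)
  rw [hEd.deriv]
  have hxne : (x:ℂ) - 1 ≠ 0 := sub_ne_zero.2 (by exact_mod_cast hx1.ne')
  have hL := h0 _ hre
  have hLn : LSeries (fun n => f n) x ≠ 0 := by
    intro h; apply hx; rw [← hL, h, zero_mul]
  rw [← hL]
  rcases k with _ | k
  · simp only [pow_zero, mul_one, Nat.cast_zero, zero_mul, mul_zero, add_zero]
    field_simp
    ring
  · rw [Nat.add_sub_cancel]
    field_simp
    push_cast
    ring

lemma mulChar_sum_group {G : Type*} [CommGroup G] [Fintype G] {χ : MulChar G ℂ} (h : χ ≠ 1) :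
    ∑ A, χ A = 0 := by
  have : ∃ B, χ B ≠ 1 := by
    by_contra! hh
    apply h
    ext u
    simp [hh]
  obtain ⟨B, hB⟩ := this
  have h : χ B * ∑ A, χ A = ∑ A, χ A := by
    rw [Finset.mul_sum, ← Equiv.sum_comp (Equiv.mulLeft B) (fun A => χ A)]
    simp
  have : (χ B - 1) * ∑ A, χ A = 0 := by rw [sub_mul, h]; ring
  exact (mul_eq_zero.1 this).resolve_left (sub_ne_zero.2 hB)

open scoped ComplexOrder in
theorem analytic_core {G : Type*} [CommGroup G] [Fintype G] (r l : G → ℕ → ℝ) {κ K : ℝ} (hκ : 0 < κ)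
    (hr0 : ∀ A, r A 0 = 0) (hr : ∀ A n, 0 ≤ r A n)
    (hsum : ∀ A, ∀ t : ℝ, 0 < t → Summable (fun n : ℕ => r A n * rexp (-(n * t))))
    (has : ∀ A, ∀ N : ℕ, ∃ C : ℝ, ∀ t : ℝ, 0 < t → t ≤ 1 →
      |(∑' n : ℕ, r A n * rexp (-(n * t))) - κ / t| ≤ C * t ^ N)
    (hr1 : r 1 1 = 1) (hr1' : ∀ A, A ≠ 1 → r A 1 = 0)
    (hl : ∀ A n, 0 ≤ l A n) (hlK : ∀ A n, l A n ≤ K * ArithmeticFunction.vonMangoldt n)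
    (hrec : ∀ A n, r A n * Real.log n = ∑ p ∈ n.divisorsAntidiagonal, ∑ B, r B p.1 * l (B⁻¹ * A) p.2)
    (A0 : G) : ∃ p : ℕ, p.Prime ∧ l A0 p ≠ 0 := by
  classical
  let _ : Fintype (MulChar G ℂ) := Fintype.ofFinite _
  have hl0 : ∀ A, l A 0 = 0 := fun A => le_antisymm (by simpa using hlK A 0) (hl A 0)
  have hl1 : ∀ A, l A 1 = 0 := fun A => le_antisymm (by simpa using hlK A 1) (hl A 1)
  let f : MulChar G ℂ → ArithmeticFunction ℂ := fun χ => ⟨fun n => ∑ A, χ A * r A n, by simp [hr0]⟩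
  let g : MulChar G ℂ → ArithmeticFunction ℂ := fun χ => ⟨fun n => ∑ A, χ A * l A n, by simp [hl0]⟩
  have hf : ∀ χ n, f χ n = ∑ A, χ A * r A n := fun _ _ => rfl
  have hg : ∀ χ n, g χ n = ∑ A, χ A * l A n := fun _ _ => rfl
  -- summability
  have hrs : ∀ A, ∀ s : ℂ, 1 < s.re → LSeriesSummable (fun n => (r A n : ℂ)) s := by
    intro A s hs
    refine partial_sum_bound (hr A) (hsum A) (κ := κ) ?_ hs
    obtain ⟨C, hC⟩ := has A 0
    exact ⟨C, fun t ht ht1 => by simpa using hC t ht ht1⟩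
  have hls : ∀ A, ∀ s : ℂ, 1 < s.re → LSeriesSummable (fun n => (l A n : ℂ)) s := by
    intro A s hs
    have h1 := (ArithmeticFunction.LSeriesSummable_vonMangoldt hs).norm.mul_left K
    refine Summable.of_norm_bounded h1 fun n => ?_
    rcases eq_or_ne n 0 with rfl | hn
    · simp
    · rw [LSeries.term_of_ne_zero hn, LSeries.term_of_ne_zero hn, norm_div, norm_div, ← mul_div_assoc]
      gcongr
      rw [Complex.norm_real, Complex.norm_real, Real.norm_eq_abs, Real.norm_eq_abs, abs_of_nonneg (hl A n),
        abs_of_nonneg ArithmeticFunction.vonMangoldt_nonneg]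
      exact hlK A n
  have hfs : ∀ χ, ∀ s : ℂ, 1 < s.re → LSeriesSummable (fun n => f χ n) s := by
    intro χ s hs
    have := LSeriesSummable.sum (S := Finset.univ) (f := fun A => (χ A) • fun n => (r A n : ℂ)) (s := s)
      fun A _ => (hrs A s hs).smul _
    convert this using 1
    ext n
    simp [hf]
  have hgs : ∀ χ, ∀ s : ℂ, 1 < s.re → LSeriesSummable (fun n => g χ n) s := by
    intro χ s hs
    have := LSeriesSummable.sum (S := Finset.univ) (f := fun A => (χ A) • fun n => (l A n : ℂ)) (s := s)
      fun A _ => (hls A s hs).smul _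
    convert this using 1
    ext n
    simp [hg]
  -- recursion
  have hlog : ∀ χ, logD (f χ) = f χ * g χ := by
    intro χ
    ext n
    rw [logD_apply, ArithmeticFunction.mul_apply, hf, Finset.sum_mul]
    have e1 : ∀ A, χ A * (r A n : ℂ) * (Real.log n : ℂ) =
        ∑ p ∈ n.divisorsAntidiagonal, ∑ B, χ A * ((r B p.1 : ℂ) * l (B⁻¹ * A) p.2) := by
      intro A
      rw [mul_assoc, ← Complex.ofReal_mul, hrec A n]
      push_cast
      simp only [Finset.mul_sum]
    rw [Finset.sum_congr rfl fun A _ => e1 A, Finset.sum_comm]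
    refine Finset.sum_congr rfl fun p _ => ?_
    rw [Finset.sum_comm, hf, hg, Finset.sum_mul]
    refine Finset.sum_congr rfl fun B _ => ?_
    rw [Finset.mul_sum, ← Equiv.sum_comp (Equiv.mulLeft B)]
    refine Finset.sum_congr rfl fun A _ => ?_
    simp
    ring
  -- mellin
  have hmel : ∀ χ, ∃ H : ℂ → ℂ, Differentiable ℂ H ∧ ∀ s, 1 < s.re →
      LSeries (fun n => f χ n) s = (H s + (κ * ∑ A, χ A) / (s - 1)) * (Complex.Gamma s)⁻¹ := by
    intro χ
    have hs2 : ∀ A t, 0 < t → Summable (fun n : ℕ => (χ A * r A n) * (rexp (-(n * t)) : ℂ)) := by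
      intro A t ht
      have := ((Complex.summable_ofReal.2 (hsum A t ht)).mul_left (χ A))
      refine this.congr fun n => ?_
      push_cast; ring
    refine mellin_entire (a := fun n => f χ n) (by simp) ?_ _ ?_ (hfs χ)
    · intro t ht
      have h1 : Summable (fun n : ℕ => ∑ A, (χ A * r A n) * (rexp (-(n * t)) : ℂ)) :=
        summable_sum fun A _ => hs2 A t ht
      refine h1.norm.congr fun n => ?_
      rw [← Finset.sum_mul, ← hf, norm_mul, Complex.norm_real, Real.norm_eq_abs, abs_of_pos (exp_pos _)]
    · intro N
      choose C hC using fun A => has A N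
      refine ⟨∑ A, ‖χ A‖ * C A, fun t ht ht1 => ?_⟩
      have h1 : (∑' n : ℕ, f χ n * rexp (-(n * t)) : ℂ) =
          ∑ A, χ A * ((∑' n : ℕ, r A n * rexp (-(n * t)) : ℝ) : ℂ) := by
        simp only [hf, Finset.sum_mul]
        rw [Summable.tsum_finsetSum fun A _ => hs2 A t ht]
        refine Finset.sum_congr rfl fun A _ => ?_
        rw [Complex.ofReal_tsum, ← tsum_mul_left]
        refine tsum_congr fun n => ?_
        push_cast; ring
      have h2 : ((κ * ∑ A, χ A) / t : ℂ) = ∑ A, χ A * ((κ / t : ℝ) : ℂ) := by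
        rw [← Finset.sum_mul]; push_cast; ring
      rw [h1, h2, ← Finset.sum_sub_distrib, Finset.sum_mul]
      refine (norm_sum_le _ _).trans (Finset.sum_le_sum fun A _ => ?_)
      rw [← mul_sub, norm_mul, ← Complex.ofReal_sub, Complex.norm_real, mul_assoc]
      exact mul_le_mul_of_nonneg_left (hC A t ht ht1) (norm_nonneg _)
  choose H hH1 hH2 using hmel
  have hΓ : Differentiable ℂ fun s => (Complex.Gamma s)⁻¹ := Complex.differentiable_one_div_Gamma
  let E : MulChar G ℂ → ℂ → ℂ := fun χ s =>
    if χ = 1 then ((s - 1) * H χ s + κ * ∑ A, χ A) * (Complex.Gamma s)⁻¹ else H χ s * (Complex.Gamma s)⁻¹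
  have hE1 : ∀ s, E 1 s = ((s - 1) * H 1 s + κ * ∑ A : G, (1 : MulChar G ℂ) A) * (Complex.Gamma s)⁻¹ :=
    fun s => if_pos rfl
  have hEχ : ∀ χ, χ ≠ 1 → ∀ s, E χ s = H χ s * (Complex.Gamma s)⁻¹ := fun χ h s => if_neg h
  have hEd : ∀ χ, Differentiable ℂ (E χ) := by
    intro χ
    by_cases h : χ = 1
    · subst h
      have : E 1 = _ := funext hE1
      rw [this]
      exact (((differentiable_id.sub_const 1).mul (hH1 1)).add_const _).mul hΓ
    · have : E χ = _ := funext (hEχ χ h)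
      rw [this]
      exact (hH1 χ).mul hΓ
  have hL1 : ∀ s : ℂ, 1 < s.re → LSeries (fun n => f 1 n) s * (s - 1) = E 1 s := by
    intro s hs
    have hne : s - 1 ≠ 0 := by
      intro h; rw [sub_eq_zero] at h; rw [h] at hs; simp at hs
    rw [hH2 1 s hs, hE1]
    field_simp
  have hLχ : ∀ χ, χ ≠ 1 → ∀ s : ℂ, 1 < s.re → LSeries (fun n => f χ n) s = E χ s := by
    intro χ h s hs
    rw [hH2 χ s hs, hEχ χ h, mulChar_sum_group h]
    simp
  have hE10 : E 1 0 = 0 := by rw [hE1]; simp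
  have hone : ∀ A : G, (1 : MulChar G ℂ) A = 1 := fun A => MulChar.one_apply (Group.isUnit A)
  have hE11 : E 1 1 ≠ 0 := by
    rw [hE1]
    simp [hone, hκ.ne']
  have horth : ∀ A B : G, ∑ χ : MulChar G ℂ, χ B⁻¹ * χ A = if A = B then (Fintype.card (MulChar G ℂ) : ℂ) else 0 := by
    intro A B
    simp_rw [← map_mul]
    split_ifs with h
    · subst h; simp
    · exact mulChar_sum_chars fun h' => h (inv_mul_eq_one.1 h').symm
  have hsg : ∀ (B : G) n, ∑ χ : MulChar G ℂ, χ B⁻¹ * g χ n = Fintype.card (MulChar G ℂ) * l B n := by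
    intro B n
    simp_rw [hg, Finset.mul_sum]
    rw [Finset.sum_comm]
    simp_rw [← mul_assoc, ← Finset.sum_mul, horth]
    simp
  have hsgen : ∀ n, (∑ χ, g χ) n = Fintype.card (MulChar G ℂ) * l 1 n := by
    intro n
    rw [← hsg 1 n]
    have : ∀ S : Finset (MulChar G ℂ), (∑ χ ∈ S, g χ) n = ∑ χ ∈ S, g χ n := by
      intro S
      induction S using Finset.induction_on with
      | empty => simp
      | insert a S ha ih => rw [Finset.sum_insert ha, Finset.sum_insert ha, ArithmeticFunction.add_apply, ih]
    rw [this]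
    simp
  have hEne : ∀ χ, E χ 1 ≠ 0 := by
    intro χ
    by_cases h : χ = 1
    · rw [h]; exact hE11
    · refine chars_nonvanish 1 f g E hEd hE10 hL1 hLχ hfs hlog ?_ ?_ ?_ χ h
      · intro χ
        rw [hf, Finset.sum_eq_single 1]
        · simp [hr1]
        · intro A _ hA; simp [hr1' A hA]
        · simp
      · intro n
        rw [hsgen]
        exact mul_nonneg (Nat.cast_nonneg _) (by exact_mod_cast hl 1 n)
      · rw [hsgen, hl1]; simp
  have hlim : ∀ χ : MulChar G ℂ, Tendsto (fun x : ℝ => ((x:ℂ) - 1) * LSeries (fun n => g χ n) x) (𝓝[>] 1)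
      (𝓝 ((if χ = 1 then 1 else 0 : ℕ) : ℂ)) := by
    intro χ
    refine logderiv_tendsto (f χ) (g χ) (E χ) (hEd χ) (hEne χ) _ ?_ (hfs χ) (hgs χ) (hlog χ)
    intro s hs
    split_ifs with h
    · subst h; rw [pow_one]; exact hL1 s hs
    · rw [pow_zero, mul_one]; exact hLχ χ h s hs
  by_contra! hcon
  have hlim2 : Tendsto (fun x : ℝ => ((x:ℂ) - 1) * (Fintype.card (MulChar G ℂ) * LSeries (fun n => (l A0 n : ℂ)) x))
      (𝓝[>] 1) (𝓝 1) := by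
    have h1 := tendsto_finsetSum Finset.univ fun χ (_ : χ ∈ (Finset.univ : Finset (MulChar G ℂ))) =>
      (hlim χ).const_mul (χ A0⁻¹)
    have e : ∑ χ : MulChar G ℂ, χ A0⁻¹ * ((if χ = 1 then 1 else 0 : ℕ) : ℂ) = 1 := by
      simp [hone]
    rw [e] at h1
    refine h1.congr' ?_
    filter_upwards [self_mem_nhdsWithin] with x hx
    have hre : 1 < (x:ℂ).re := by simpa using hx
    have h2 := LSeries_sum (S := Finset.univ) (f := fun χ : MulChar G ℂ => (χ A0⁻¹) • fun n => g χ n) (s := x)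
      fun χ _ => (hgs χ x hre).smul _
    have h3 : (∑ χ : MulChar G ℂ, (χ A0⁻¹) • fun n => g χ n) =
        (Fintype.card (MulChar G ℂ) : ℂ) • fun n => (l A0 n : ℂ) := by
      ext n
      rw [Finset.sum_apply]
      exact hsg A0 n
    rw [h3, LSeries_smul] at h2
    rw [h2, Finset.mul_sum]
    refine Finset.sum_congr rfl fun χ _ => ?_
    rw [LSeries_smul]; ring
  have hnp : Summable fun n : ℕ => (if n.Prime then 0 else ArithmeticFunction.vonMangoldt n) / n := by
    have := ArithmeticFunction.vonMangoldt.summable_residueClass_non_primes_div (q := 1) (a := 1)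
    refine this.congr fun n => ?_
    congr 2
    simp [ArithmeticFunction.vonMangoldt.residueClass, Subsingleton.elim ((n : ZMod 1)) 1]
  have hbd : ∀ x : ℝ, 1 < x → ‖LSeries (fun n => (l A0 n : ℂ)) x‖ ≤
      ∑' n : ℕ, K * ((if n.Prime then 0 else ArithmeticFunction.vonMangoldt n) / n) := by
    intro x hx
    refine tsum_of_norm_bounded (hnp.mul_left K).hasSum fun n => ?_
    rcases eq_or_ne n 0 with rfl | hn
    · simp
    rw [LSeries.term_of_ne_zero hn, norm_div, Complex.norm_real, Real.norm_eq_abs, abs_of_nonneg (hl A0 n),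
      ← mul_div_assoc]
    have hn1 : (1:ℝ) ≤ n := by exact_mod_cast Nat.one_le_iff_ne_zero.2 hn
    have hcp : (n:ℝ) ≤ ‖(n:ℂ) ^ (x:ℂ)‖ := by
      rw [Complex.norm_natCast_cpow_of_pos (Nat.pos_of_ne_zero hn), Complex.ofReal_re]
      calc (n:ℝ) = (n:ℝ) ^ (1:ℝ) := (Real.rpow_one _).symm
        _ ≤ _ := Real.rpow_le_rpow_of_exponent_le hn1 hx.le
    split_ifs with hp
    · simp [hcon n hp]
    · have := hlK A0 n
      have h0 := hl A0 n
      gcongr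
      exact h0.trans this
  have hlim3 : Tendsto (fun x : ℝ => ((x:ℂ) - 1) * (Fintype.card (MulChar G ℂ) * LSeries (fun n => (l A0 n : ℂ)) x))
      (𝓝[>] 1) (𝓝 0) := by
    set B := ∑' n : ℕ, K * ((if n.Prime then 0 else ArithmeticFunction.vonMangoldt n) / n) with hB
    have ht : Tendsto (fun x : ℝ => |x - 1| * (Fintype.card (MulChar G ℂ) * B)) (𝓝[>] 1) (𝓝 0) := by
      refine Tendsto.mono_left ?_ nhdsWithin_le_nhds
      have : Continuous fun x : ℝ => |x - 1| * (Fintype.card (MulChar G ℂ) * B) := by fun_prop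
      simpa using this.tendsto 1
    refine squeeze_zero_norm' ?_ ht
    filter_upwards [self_mem_nhdsWithin] with x hx
    rw [norm_mul, norm_mul]
    have e : ‖(x:ℂ) - 1‖ = |x - 1| := by
      rw [← Real.norm_eq_abs, ← Complex.norm_real]; push_cast; rfl
    rw [e, Complex.norm_natCast]
    gcongr
    exact hbd x hx
  exact zero_ne_one (tendsto_nhds_unique hlim3 hlim2)

end FileP2c

section FileP3a
open Real Set Filter Topology

section Theta
variable {O : Type*} [CommRing O] [IsDedekindDomain O] [Module.Free ℤ O] [Module.Finite ℤ O]

/-- theta function of a coset of an ideal -/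
noncomputable def thetaC (φ : O →+* ℂ) (I : Ideal O) (β : O) (t : ℝ) : ℝ :=
  ∑' x : I, rexp (-(t * ‖φ (β + x)‖ ^ 2))

lemma thetaC_aux (φ : O →+* ℂ) (hφ : Function.Injective φ) (hrank : Module.finrank ℤ O = 2)
    (hγ : ∃ γ, (φ γ).im ≠ 0) (I : Ideal O) (hI : I ≠ ⊥) :
    (∀ (β : O) (t : ℝ), 0 < t → Summable (fun x : I => rexp (-(t * ‖φ (β + x)‖ ^ 2)))) ∧
    ∃ κ : ℝ, 0 < κ ∧ ∀ N : ℕ, ∃ C : ℝ, 0 ≤ C ∧ ∀ t : ℝ, 0 < t → t ≤ 1 → ∀ β : O,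
      |thetaC φ I β t - κ / t| ≤ C * t ^ N := by
  obtain ⟨γ, hγ⟩ := hγ
  let b : Module.Basis (Fin 2) ℤ O := Module.finBasisOfFinrankEq ℤ O hrank
  let w : Module.Basis (Fin 2) ℤ I := I.selfBasis b hI
  let u : O := w 0
  let v : O := w 1
  have hrepr : ∀ x : I, (x : O) = (w.repr x 0) * u + (w.repr x 1) * v := by
    intro x
    have h := congrArg (Subtype.val : I → O) (w.sum_repr x)
    rw [Fin.sum_univ_two] at h
    rw [← h]
    simp [u, v]
  let e : I ≃ ℤ × ℤ := w.equivFun.toEquiv.trans ((finTwoArrowEquiv ℤ).trans (Equiv.prodComm _ _))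
  have he : ∀ x : I, (x : O) = ((e x).2 : ℤ) * u + ((e x).1 : ℤ) * v := hrepr
  have hu0 : u ≠ 0 := by
    intro h
    exact w.ne_zero 0 (Subtype.ext h)
  have hu : φ u ≠ 0 := (map_ne_zero_iff φ hφ).2 hu0
  have huv : (φ v / φ u).im ≠ 0 := by
    intro h
    have hx := he ⟨γ * u, I.mul_mem_left γ (w 0).2⟩
    have h2 := congrArg φ hx
    simp only [map_add, map_mul, map_intCast] at h2
    apply hγ
    have : φ γ = ((e ⟨γ * u, I.mul_mem_left γ (w 0).2⟩).2 : ℂ) + (e ⟨γ * u, I.mul_mem_left γ (w 0).2⟩).1 * (φ v / φ u) := by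
      field_simp
      exact h2
    rw [this]
    simp [Complex.add_im, Complex.mul_im, h]
  obtain ⟨h1, κ, hκ, h2⟩ := lattice_theta hu huv
  have hfun : ∀ (β : O) (t : ℝ) (x : I), rexp (-(t * ‖φ (β + x)‖ ^ 2)) =
      rexp (-(t * ‖φ β + (e x).2 * φ u + (e x).1 * φ v‖ ^ 2)) := by
    intro β t x
    rw [he x]
    simp only [map_add, map_mul, map_intCast, add_assoc]
  refine ⟨fun β t ht => ?_, κ, hκ, fun N => ?_⟩
  · have := (e.summable_iff (f := fun p : ℤ × ℤ => rexp (-(t * ‖φ β + p.2 * φ u + p.1 * φ v‖ ^ 2)))).2 (h1 (φ β) t ht)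
    exact this.congr fun x => (hfun β t x).symm
  · obtain ⟨C, hC0, hC⟩ := h2 N
    refine ⟨C, hC0, fun t ht ht1 β => ?_⟩
    have : thetaC φ I β t = ∑' p : ℤ × ℤ, rexp (-(t * ‖φ β + p.2 * φ u + p.1 * φ v‖ ^ 2)) := by
      rw [thetaC, ← e.tsum_eq]
      exact tsum_congr fun x => hfun β t x
    rw [this]
    exact hC t ht ht1 (φ β)

/-- decomposition in cosets -/
noncomputable def cosetEquiv (I : Ideal O) : (O ⧸ I) × I ≃ O :=
  Equiv.ofBijective (fun p => p.1.out + p.2) (by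
    constructor
    · rintro ⟨q, x⟩ ⟨q', x'⟩ h
      have h : q.out + (x : O) = q'.out + x' := h
      have hq : q = q' := by
        have h2 := congrArg (Ideal.Quotient.mk I) h
        simp only [map_add, Ideal.Quotient.eq_zero_iff_mem.2 x.2, Ideal.Quotient.eq_zero_iff_mem.2 x'.2,
          add_zero] at h2
        rwa [show Ideal.Quotient.mk I q.out = q from Quotient.out_eq q,
          show Ideal.Quotient.mk I q'.out = q' from Quotient.out_eq q'] at h2
      subst hq
      have : x = x' := Subtype.ext (add_left_cancel h)
      rw [this]
    · intro y
      refine ⟨⟨Ideal.Quotient.mk I y, ⟨y - (Ideal.Quotient.mk I y).out, ?_⟩⟩, by simp⟩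
      rw [← Ideal.Quotient.eq_zero_iff_mem, map_sub, sub_eq_zero]
      exact (Quotient.out_eq (Ideal.Quotient.mk I y)).symm)

lemma thetaC_main (φ : O →+* ℂ) (hφ : Function.Injective φ) (hrank : Module.finrank ℤ O = 2)
    (hγ : ∃ γ, (φ γ).im ≠ 0) : ∃ κ : ℝ, 0 < κ ∧ ∀ I : Ideal O, I ≠ ⊥ → 
    (∀ (β : O) (t : ℝ), 0 < t → Summable (fun x : I => rexp (-(t * ‖φ (β + x)‖ ^ 2)))) ∧
    ∀ N : ℕ, ∃ C : ℝ, 0 ≤ C ∧ ∀ t : ℝ, 0 < t → t ≤ 1 → ∀ β : O,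
      |thetaC φ I β t - (κ / Ideal.absNorm I) / t| ≤ C * t ^ N := by
  obtain ⟨hs0, κ, hκ, h0⟩ := thetaC_aux φ hφ hrank hγ ⊤ (by simp)
  refine ⟨κ, hκ, fun I hI => ?_⟩
  obtain ⟨hs1, κ', hκ', h1⟩ := thetaC_aux φ hφ hrank hγ I hI
  refine ⟨hs1, ?_⟩
  suffices h : κ / Ideal.absNorm I = κ' by rw [h]; exact h1
  have hfin : Finite (O ⧸ I) := by
    rw [← Ideal.absNorm_ne_zero_iff]; rwa [Ne, Ideal.absNorm_eq_zero_iff]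
  let _ := Fintype.ofFinite (O ⧸ I)
  have hcard : Ideal.absNorm I = Fintype.card (O ⧸ I) := by
    rw [Ideal.absNorm_apply, Submodule.cardQuot_apply, Nat.card_eq_fintype_card]
  have hpos : (0:ℝ) < Ideal.absNorm I := by
    exact_mod_cast Nat.pos_of_ne_zero (by rwa [Ne, Ideal.absNorm_eq_zero_iff])
  have hdec : ∀ t, 0 < t → thetaC φ ⊤ 0 t = ∑ q : O ⧸ I, thetaC φ I q.out t := by
    intro t ht
    have e1 : thetaC φ ⊤ 0 t = ∑' y : O, rexp (-(t * ‖φ y‖ ^ 2)) := by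
      rw [thetaC, ← (Equiv.subtypeUnivEquiv (p := fun x => x ∈ (⊤ : Ideal O)) fun x => Submodule.mem_top).tsum_eq]
      refine tsum_congr fun x => ?_
      rw [zero_add]; rfl
    have hsO : Summable fun y : O => rexp (-(t * ‖φ y‖ ^ 2)) := by
      rw [← (Equiv.subtypeUnivEquiv (p := fun x => x ∈ (⊤ : Ideal O)) fun x => Submodule.mem_top).summable_iff]
      refine (hs0 0 t ht).congr fun x => ?_
      rw [zero_add]; rfl
    have hs' : Summable fun c : (O ⧸ I) × I => rexp (-(t * ‖φ (cosetEquiv I c)‖ ^ 2)) :=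
      ((cosetEquiv I).summable_iff (f := fun y : O => rexp (-(t * ‖φ y‖ ^ 2)))).2 hsO
    rw [e1, ← (cosetEquiv I).tsum_eq, hs'.tsum_prod, tsum_fintype]
    rfl
  obtain ⟨C0, hC0, hb0⟩ := h0 0
  obtain ⟨C1, hC1, hb1⟩ := h1 0
  have key : ∀ t : ℝ, 0 < t → t ≤ 1 → |κ - Ideal.absNorm I * κ'| ≤ (C0 + Ideal.absNorm I * C1) * t := by
    intro t ht ht1
    have a0 := hb0 t ht ht1 0
    have a1 : |∑ q : O ⧸ I, thetaC φ I q.out t - Ideal.absNorm I * (κ' / t)| ≤ Ideal.absNorm I * C1 := by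
      have : ∑ q : O ⧸ I, thetaC φ I q.out t - Ideal.absNorm I * (κ' / t) =
          ∑ q : O ⧸ I, (thetaC φ I q.out t - κ' / t) := by
        rw [Finset.sum_sub_distrib, hcard]; simp
      rw [this]
      refine (Finset.abs_sum_le_sum_abs _ _).trans ?_
      refine (Finset.sum_le_sum fun q _ => hb1 t ht ht1 q.out).trans ?_
      rw [hcard]; simp
    rw [hdec t ht, pow_zero, mul_one] at a0
    have e : κ - Ideal.absNorm I * κ' = t * (κ / t - Ideal.absNorm I * (κ' / t)) := by field_simp
    rw [e, abs_mul, abs_of_pos ht, mul_comm]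
    gcongr
    rw [abs_le] at *
    constructor <;> linarith
  have hz : κ - Ideal.absNorm I * κ' = 0 := by
    by_contra hne
    have habs := abs_pos.2 hne
    set D := C0 + Ideal.absNorm I * C1 with hD
    have hD0 : 0 ≤ D := by positivity
    let t := min 1 (|κ - Ideal.absNorm I * κ'| / (2 * (D + 1)))
    have ht : 0 < t := lt_min one_pos (by positivity)
    have h3 := key t ht (min_le_left _ _)
    have h4 : t ≤ |κ - Ideal.absNorm I * κ'| / (2 * (D + 1)) := min_le_right _ _
    rw [le_div_iff₀ (by positivity)] at h4
    nlinarith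
  rw [div_eq_iff hpos.ne']
  linarith
end Theta

end FileP3a

section FileP3b
open Real Set Filter Topology

section Ray
variable {O : Type*} [CommRing O] [IsDedekindDomain O]

lemma mem_left_of_mem_mul {R : Type*} [CommRing R] {I J : Ideal R} {x : R} (h : x ∈ I * J) : x ∈ I :=
  (Ideal.mul_le_left : I * J ≤ I) h

lemma mem_right_of_mem_mul {R : Type*} [CommRing R] {I J : Ideal R} {x : R} (h : x ∈ I * J) : x ∈ J :=
  (Ideal.mul_le_right : I * J ≤ J) h

/-- ideals coprime to `M` -/
def rayIdeals (O : Type*) [CommRing O] (M : ℕ) : Submonoid (Ideal O) where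
  carrier := {I | IsCoprime I (Ideal.span {(M : O)})}
  one_mem' := isCoprime_one_left
  mul_mem' := fun h1 h2 => IsCoprime.mul_left h1 h2

/-- congruence to one -/
def cong1 (M : ℕ) (α : O) : Prop := (M : O) ∣ α - 1

lemma cong1.mul {M : ℕ} {α β : O} (h1 : cong1 M α) (h2 : cong1 M β) : cong1 M (α * β) := by
  obtain ⟨x, hx⟩ := h1
  obtain ⟨y, hy⟩ := h2
  refine ⟨x * β + y, ?_⟩
  linear_combination β * hx + hy

lemma cong1_one {M : ℕ} : cong1 M (1 : O) := ⟨0, by simp⟩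

lemma mem_rayIdeals_of_mem {M : ℕ} {I : Ideal O} {α : O} (h : α ∈ I) (h1 : cong1 M α) : I ∈ rayIdeals O M := by
  change IsCoprime I (Ideal.span {(M : O)})
  rw [Ideal.isCoprime_iff_exists]
  obtain ⟨x, hx⟩ := h1
  exact ⟨α, h, -(M * x), by rw [Ideal.mem_span_singleton]; exact ⟨-x, by ring⟩, by rw [← hx]; ring⟩

lemma exists_mem_cong1 {M : ℕ} {I : Ideal O} (h : I ∈ rayIdeals O M) : ∃ α ∈ I, cong1 M α := by
  have h : IsCoprime I (Ideal.span {(M : O)}) := h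
  rw [Ideal.isCoprime_iff_exists] at h
  obtain ⟨i, hi, j, hj, hij⟩ := h
  rw [Ideal.mem_span_singleton] at hj
  obtain ⟨y, rfl⟩ := hj
  exact ⟨i, hi, -y, by linear_combination hij⟩

lemma exists_inv {M : ℕ} {I : Ideal O} (h : I ∈ rayIdeals O M) :
    ∃ α, cong1 M α ∧ ∃ I' ∈ rayIdeals O M, I * I' = Ideal.span {α} := by
  obtain ⟨α, hα, h1⟩ := exists_mem_cong1 h
  obtain ⟨I', hI'⟩ := Ideal.dvd_iff_le.2 ((Ideal.span_singleton_le_iff_mem I).2 hα)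
  refine ⟨α, h1, I', mem_rayIdeals_of_mem (α := α) ?_ h1, hI'.symm⟩
  have : α ∈ I * I' := by rw [← hI']; exact Ideal.mem_span_singleton_self α
  exact mem_right_of_mem_mul this

/-- ray equivalence -/
def rayCon (O : Type*) [CommRing O] [IsDedekindDomain O] (M : ℕ) : Con (rayIdeals O M) where
  r I J := ∃ α β : O, cong1 M α ∧ cong1 M β ∧ Ideal.span {α} * (I : Ideal O) = Ideal.span {β} * (J : Ideal O)
  iseqv := {
    refl := fun I => ⟨1, 1, cong1_one, cong1_one, rfl⟩
    symm := fun {I J} ⟨α, β, h1, h2, h⟩ => ⟨β, α, h2, h1, h.symm⟩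
    trans := fun {I J L} ⟨α, β, h1, h2, h⟩ ⟨γ, δ, h3, h4, h'⟩ =>
      ⟨γ * α, β * δ, h3.mul h1, h2.mul h4, by
        rw [← Ideal.span_singleton_mul_span_singleton, ← Ideal.span_singleton_mul_span_singleton,
          mul_assoc, h, mul_assoc, ← h', mul_left_comm]⟩ }
  mul' := by
    rintro I J I' J' ⟨α, β, h1, h2, h⟩ ⟨γ, δ, h3, h4, h'⟩
    refine ⟨α * γ, β * δ, h1.mul h3, h2.mul h4, ?_⟩
    rw [← Ideal.span_singleton_mul_span_singleton, ← Ideal.span_singleton_mul_span_singleton,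
      Submonoid.coe_mul, Submonoid.coe_mul, mul_mul_mul_comm, h, h', mul_mul_mul_comm]

/-- ray class group -/
abbrev RayCl (O : Type*) [CommRing O] [IsDedekindDomain O] (M : ℕ) : Type _ := (rayCon O M).Quotient

/-- class map -/
def rayCls (O : Type*) [CommRing O] [IsDedekindDomain O] (M : ℕ) : rayIdeals O M →* RayCl O M := (rayCon O M).mk'

lemma rayCls_eq_one_iff {M : ℕ} (hM : ¬ IsUnit (M : O)) (I : rayIdeals O M) :
    rayCls O M I = 1 ↔ ∃ α, cong1 M α ∧ (I : Ideal O) = Ideal.span {α} := by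
  have h0 : ∀ {α : O}, cong1 M α → α ≠ 0 := by
    rintro α ⟨x, hx⟩ rfl
    exact hM (IsUnit.of_mul_eq_one (-x) (by linear_combination hx))
  constructor
  · intro h
    have h : rayCls O M I = rayCls O M 1 := by rw [h, map_one]
    obtain ⟨α, β, h1, h2, h⟩ := (Con.eq (rayCon O M)).1 h
    rw [Submonoid.coe_one, mul_one] at h
    obtain ⟨γ, hγ⟩ : α ∣ β := by
      rw [← Ideal.mem_span_singleton]
      have : β ∈ Ideal.span {α} * (I : Ideal O) := by rw [h]; exact Ideal.mem_span_singleton_self β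
      exact mem_left_of_mem_mul this
    refine ⟨γ, ?_, ?_⟩
    · obtain ⟨x, hx⟩ := h1
      obtain ⟨y, hy⟩ := h2
      refine ⟨y - x * γ, ?_⟩
      subst hγ
      linear_combination hy - γ * hx
    · rw [hγ, ← Ideal.span_singleton_mul_span_singleton] at h
      exact mul_left_cancel₀ (by simpa using h0 h1) h
  · rintro ⟨α, h1, h⟩
    rw [← map_one (rayCls O M)]
    refine (Con.eq (rayCon O M)).2 ⟨1, α, cong1_one, h1, ?_⟩
    rw [h]; simp

lemma rayCls_isUnit {M : ℕ} (hM : ¬ IsUnit (M : O)) (A : RayCl O M) : IsUnit A := by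
  obtain ⟨I, rfl⟩ := Con.mk'_surjective A
  obtain ⟨α, h1, I', hI', h⟩ := exists_inv I.2
  refine IsUnit.of_mul_eq_one ((rayCls O M) ⟨I', hI'⟩) ?_
  change rayCls O M I * _ = 1
  rw [← map_mul, rayCls_eq_one_iff hM]
  exact ⟨α, h1, h⟩

lemma ray_ne_bot {M : ℕ} (hM : ¬ IsUnit (M : O)) {I : Ideal O} (h : I ∈ rayIdeals O M) : I ≠ ⊥ := by
  rintro rfl
  obtain ⟨α, hα, x, hx⟩ := exists_mem_cong1 h
  rw [Ideal.mem_bot.1 hα] at hx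
  exact hM (IsUnit.of_mul_eq_one (-x) (by linear_combination hx))

open scoped nonZeroDivisors in
lemma rayCl_finite {M : ℕ} (hM : ¬ IsUnit (M : O)) [Finite (ClassGroup O)]
    [Finite (O ⧸ Ideal.span {(M : O)})] : Finite (RayCl O M) := by
  classical
  let toN : rayIdeals O M → (Ideal O)⁰ := fun I => ⟨I, mem_nonZeroDivisors_of_ne_zero (ray_ne_bot hM I.2)⟩
  let c : rayIdeals O M → ClassGroup O := fun I => ClassGroup.mk0 (toN I)
  let rep : ClassGroup O → rayIdeals O M := fun C => if h : ∃ I, c I = C then h.choose else 1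
  have hrep : ∀ I, c (rep (c I)) = c I := by
    intro I
    have h : ∃ J, c J = c I := ⟨I, rfl⟩
    simp only [rep, dif_pos h]
    exact h.choose_spec
  -- key
  have key : ∀ I : rayIdeals O M, ∃ α γ : O, cong1 M α ∧ (∃ γ', cong1 M (γ' * γ)) ∧
      Ideal.span {γ} * (I : Ideal O) = Ideal.span {α} * (rep (c I) : Ideal O) := by
    intro I
    obtain ⟨x, y, hx, hy, hxy⟩ := ClassGroup.mk0_eq_mk0_iff.1 (hrep I)
    have hxy : Ideal.span {x} * (rep (c I) : Ideal O) = Ideal.span {y} * (I : Ideal O) := hxy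
    obtain ⟨α, h1, I', hI', hII⟩ := exists_inv I.2
    have e1 : Ideal.span {x} * ((rep (c I) : Ideal O) * I') = Ideal.span {y * α} := by
      rw [← mul_assoc, hxy, mul_assoc, hII, Ideal.span_singleton_mul_span_singleton]
    obtain ⟨γ, hγ⟩ : x ∣ y * α := by
      rw [← Ideal.mem_span_singleton]
      have : y * α ∈ Ideal.span {x} * ((rep (c I) : Ideal O) * I') := by rw [e1]; exact Ideal.mem_span_singleton_self _
      exact mem_left_of_mem_mul this
    rw [hγ, ← Ideal.span_singleton_mul_span_singleton] at e1
    have e2 := mul_left_cancel₀ (by simpa using hx) e1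
    have hray : Ideal.span {γ} ∈ rayIdeals O M := by
      rw [← e2]; exact mul_mem (rep (c I)).2 hI'
    obtain ⟨δ, hδ, hδ1⟩ := exists_mem_cong1 hray
    obtain ⟨γ', rfl⟩ := Ideal.mem_span_singleton'.1 hδ
    refine ⟨α, γ, h1, ⟨γ', hδ1⟩, ?_⟩
    rw [← e2, ← hII]; ring
  choose α γ hα hγ hkey using key
  choose γ' hγ' using hγ
  have hsurj : Function.Surjective (rayCls O M) := Con.mk'_surjective
  let F : RayCl O M → ClassGroup O × (O ⧸ Ideal.span {(M : O)}) := fun A =>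
    (c (Function.surjInv hsurj A), Ideal.Quotient.mk _ (γ (Function.surjInv hsurj A)))
  refine Finite.of_injective F ?_
  intro A B hAB
  rw [← Function.surjInv_eq hsurj A, ← Function.surjInv_eq hsurj B]
  set I := Function.surjInv hsurj A
  set J := Function.surjInv hsurj B
  have hc : c I = c J := congrArg Prod.fst hAB
  have hq : Ideal.Quotient.mk (Ideal.span {(M : O)}) (γ I) = Ideal.Quotient.mk _ (γ J) := congrArg Prod.snd hAB
  rw [Ideal.Quotient.mk_eq_mk_iff_sub_mem, Ideal.mem_span_singleton] at hq
  have hJ : cong1 M (γ' I * γ J) := by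
    obtain ⟨z, hz⟩ := hq
    obtain ⟨y, hy⟩ := hγ' I
    refine ⟨y - γ' I * z, ?_⟩
    linear_combination hy - γ' I * hz
  refine (Con.eq (rayCon O M)).2 ⟨α J * (γ' I * γ I), α I * (γ' I * γ J), (hα J).mul (hγ' I), (hα I).mul hJ, ?_⟩
  have k1 := hkey I
  have k2 := hkey J
  rw [← hc] at k2
  simp only [← Ideal.span_singleton_mul_span_singleton]
  calc _ = Ideal.span {α J} * Ideal.span {γ' I} * (Ideal.span {γ I} * (I : Ideal O)) := by ring
    _ = Ideal.span {α I} * Ideal.span {γ' I} * (Ideal.span {α J} * (rep (c I) : Ideal O)) := by rw [k1]; ring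
    _ = _ := by rw [← k2]; ring
end Ray

end FileP3b

section FileP3c
open Real Set Filter Topology

section RayTheta
variable {O : Type*} [CommRing O] [IsDedekindDomain O] [Module.Free ℤ O] [Module.Finite ℤ O]

lemma unit_cong1 (φ : O →+* ℂ) (hN : ∀ α : O, (Ideal.absNorm (Ideal.span {α}) : ℝ) = ‖φ α‖ ^ 2)
    {M : ℕ} (hM : 3 ≤ M) {u : O} (hu : IsUnit u) (h : cong1 M u) : u = 1 := by
  obtain ⟨x, hx⟩ := h
  have h1 : ‖φ u‖ = 1 := by
    have := hN u
    rw [Ideal.span_singleton_eq_top.2 hu, Ideal.absNorm_top, Nat.cast_one] at this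
    have h0 := norm_nonneg (φ u)
    nlinarith
  by_contra hne
  have hx0 : x ≠ 0 := by
    rintro rfl
    rw [mul_zero, sub_eq_zero] at hx
    exact hne hx
  have h2 : 1 ≤ ‖φ x‖ := by
    have h3 : (1:ℝ) ≤ Ideal.absNorm (Ideal.span {x}) := by
      exact_mod_cast Nat.one_le_iff_ne_zero.2 (by rw [Ne, Ideal.absNorm_eq_zero_iff]; simpa using hx0)
    rw [hN] at h3
    have h0 := norm_nonneg (φ x)
    nlinarith
  have h3 : ‖φ (u - 1)‖ ≤ 2 := by
    rw [map_sub, map_one]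
    refine (norm_sub_le _ _).trans ?_
    rw [h1, norm_one]; norm_num
  rw [hx, map_mul, map_natCast, norm_mul, Complex.norm_natCast] at h3
  have : (3:ℝ) ≤ M := by exact_mod_cast hM
  nlinarith

lemma not_unit_M (φ : O →+* ℂ) (hN : ∀ α : O, (Ideal.absNorm (Ideal.span {α}) : ℝ) = ‖φ α‖ ^ 2)
    {M : ℕ} (hM : 3 ≤ M) : ¬ IsUnit (M : O) := by
  intro h
  have := hN M
  rw [Ideal.span_singleton_eq_top.2 h, Ideal.absNorm_top, map_natCast, Complex.norm_natCast] at this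
  have h3 : (3:ℝ) ≤ M := by exact_mod_cast hM
  push_cast at this
  nlinarith

lemma phi_inj (φ : O →+* ℂ) (hN : ∀ α : O, (Ideal.absNorm (Ideal.span {α}) : ℝ) = ‖φ α‖ ^ 2) :
    Function.Injective φ := by
  rw [injective_iff_map_eq_zero]
  intro a ha
  have := hN a
  rw [ha, norm_zero] at this
  have h0 : Ideal.absNorm (Ideal.span {a}) = 0 := by
    have : (Ideal.absNorm (Ideal.span {a}) : ℝ) = 0 := by rw [this]; norm_num
    exact_mod_cast this
  rw [Ideal.absNorm_eq_zero_iff] at h0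
  simpa using h0

lemma ray_equiv (φ : O →+* ℂ) (hN : ∀ α : O, (Ideal.absNorm (Ideal.span {α}) : ℝ) = ‖φ α‖ ^ 2)
    {M : ℕ} (hM : 3 ≤ M) (A : RayCl O M) (J : rayIdeals O M) (hJ : A * rayCls O M J = 1) (α0 : O)
    (h0 : α0 ∈ (J : Ideal O)) (h1 : cong1 M α0) :
    ∃ e : ((J : Ideal O) ⊓ Ideal.span {(M : O)} : Ideal O) ≃ {I : rayIdeals O M // rayCls O M I = A},
      ∀ x, (Ideal.absNorm ((e x).1 : Ideal O) : ℝ) * Ideal.absNorm (J : Ideal O) = ‖φ (α0 + x)‖ ^ 2 := by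
  have hMu := not_unit_M φ hN hM
  have hJ0 := ray_ne_bot hMu J.2
  have ex : ∀ x : ((J : Ideal O) ⊓ Ideal.span {(M : O)} : Ideal O),
      ∃ I : {I : rayIdeals O M // rayCls O M I = A}, (I.1 : Ideal O) * J = Ideal.span {α0 + (x : O)} := by
    rintro ⟨x, hx⟩
    obtain ⟨hx1, hx2⟩ := Submodule.mem_inf.1 hx
    have hc : cong1 M (α0 + x) := by
      obtain ⟨y, hy⟩ := h1
      obtain ⟨z, rfl⟩ := Ideal.mem_span_singleton.1 hx2
      exact ⟨y + z, by linear_combination hy⟩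
    have hm : α0 + x ∈ (J : Ideal O) := add_mem h0 hx1
    obtain ⟨I, hI⟩ := Ideal.dvd_iff_le.2 ((Ideal.span_singleton_le_iff_mem (J : Ideal O)).2 hm)
    have hIr : I ∈ rayIdeals O M := by
      refine mem_rayIdeals_of_mem (α := α0 + x) ?_ hc
      have : α0 + x ∈ (J : Ideal O) * I := by rw [← hI]; exact Ideal.mem_span_singleton_self _
      exact mem_right_of_mem_mul this
    refine ⟨⟨⟨I, hIr⟩, ?_⟩, ?_⟩
    · have h2 : rayCls O M (⟨I, hIr⟩ * J) = 1 := by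
        rw [rayCls_eq_one_iff hMu]
        exact ⟨α0 + x, hc, by rw [hI]; exact mul_comm _ _⟩
      rw [map_mul] at h2
      have hu := rayCls_isUnit hMu (rayCls O M J)
      exact hu.mul_right_cancel (h2.trans hJ.symm)
    · exact (mul_comm _ _).trans hI.symm
  choose f hf using ex
  have hbij : Function.Bijective f := by
    constructor
    · intro x y hxy
      have hs : Ideal.span {α0 + (x : O)} = Ideal.span {α0 + (y : O)} := by rw [← hf x, ← hf y, hxy]
      rw [Ideal.span_singleton_eq_span_singleton] at hs
      obtain ⟨u, hu⟩ := hs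
      have hc : ∀ x : ((J : Ideal O) ⊓ Ideal.span {(M : O)} : Ideal O), cong1 M (α0 + (x : O)) := by
        rintro ⟨x, hx⟩
        obtain ⟨hx1, hx2⟩ := Submodule.mem_inf.1 hx
        obtain ⟨y, hy⟩ := h1
        obtain ⟨z, rfl⟩ := Ideal.mem_span_singleton.1 hx2
        exact ⟨y + z, by linear_combination hy⟩
      have hu1 : cong1 M (u : O) := by
        obtain ⟨a, ha⟩ := hc x
        obtain ⟨b, hb⟩ := hc y
        refine ⟨b - a * u, ?_⟩
        linear_combination hb - (u : O) * ha + hu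
      rw [unit_cong1 φ hN hM u.isUnit hu1, mul_one] at hu
      exact Subtype.ext (add_left_cancel hu)
    · rintro ⟨I, hI⟩
      have h2 : rayCls O M (I * J) = 1 := by rw [map_mul, hI, hJ]
      obtain ⟨α, hα, hIJ⟩ := (rayCls_eq_one_iff hMu _).1 h2
      have hIJ : (I : Ideal O) * J = Ideal.span {α} := hIJ
      have hαJ : α ∈ (J : Ideal O) := by
        have : α ∈ (I : Ideal O) * J := by rw [hIJ]; exact Ideal.mem_span_singleton_self _
        exact mem_right_of_mem_mul this
      refine ⟨⟨α - α0, Submodule.mem_inf.2 ⟨sub_mem hαJ h0, ?_⟩⟩, ?_⟩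
      · rw [Ideal.mem_span_singleton]
        obtain ⟨a, ha⟩ := hα
        obtain ⟨b, hb⟩ := h1
        exact ⟨a - b, by linear_combination ha - hb⟩
      · have h3 := hf ⟨α - α0, Submodule.mem_inf.2 ⟨sub_mem hαJ h0, by
          rw [Ideal.mem_span_singleton]
          obtain ⟨a, ha⟩ := hα
          obtain ⟨b, hb⟩ := h1
          exact ⟨a - b, by linear_combination ha - hb⟩⟩⟩
        rw [add_sub_cancel, ← hIJ] at h3
        exact Subtype.ext (Subtype.ext (mul_right_cancel₀ hJ0 h3))
  refine ⟨Equiv.ofBijective f hbij, fun x => ?_⟩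
  rw [← hN, ← hf x, map_mul, Nat.cast_mul]
  rfl

lemma ray_theta (φ : O →+* ℂ) (hN : ∀ α : O, (Ideal.absNorm (Ideal.span {α}) : ℝ) = ‖φ α‖ ^ 2)
    (hrank : Module.finrank ℤ O = 2) (hγ : ∃ γ, (φ γ).im ≠ 0) {M : ℕ} (hM : 3 ≤ M) :
    ∃ κ : ℝ, 0 < κ ∧ ∀ A : RayCl O M,
      (∀ t : ℝ, 0 < t → Summable fun I : {I : rayIdeals O M // rayCls O M I = A} =>
        rexp (-(Ideal.absNorm (I.1 : Ideal O) * t))) ∧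
      ∀ N : ℕ, ∃ C : ℝ, ∀ t : ℝ, 0 < t → t ≤ 1 →
        |(∑' I : {I : rayIdeals O M // rayCls O M I = A}, rexp (-(Ideal.absNorm (I.1 : Ideal O) * t))) - κ / t|
          ≤ C * t ^ N := by
  have hMu := not_unit_M φ hN hM
  obtain ⟨κ, hκ, hth⟩ := thetaC_main φ (phi_inj φ hN) hrank hγ
  have hMpos : (0:ℝ) < M := by exact_mod_cast (by omega : 0 < M)
  refine ⟨κ / M ^ 2, by positivity, fun A => ?_⟩
  obtain ⟨B, hB⟩ := (rayCls_isUnit hMu A).exists_right_inv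
  obtain ⟨J, rfl⟩ := Con.mk'_surjective B
  change A * rayCls O M J = 1 at hB
  obtain ⟨α0, h0, h1⟩ := exists_mem_cong1 J.2
  have hequiv := ray_equiv φ hN hM A J hB α0 h0 h1
  generalize hb : (J : Ideal O) ⊓ Ideal.span {(M : O)} = b at hequiv
  obtain ⟨e, he⟩ := hequiv
  have hJ0 := ray_ne_bot hMu J.2
  have hM0 : Ideal.span {(M : O)} ≠ ⊥ := by
    intro h
    have h2 := hN M
    rw [h, Ideal.absNorm_bot, map_natCast, Complex.norm_natCast, Nat.cast_zero] at h2
    exact (pow_pos hMpos 2).ne h2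
  have hbmul : b = (J : Ideal O) * Ideal.span {(M : O)} := by
    rw [← hb, Ideal.mul_eq_inf_of_isCoprime]
    exact J.2
  have hb0 : b ≠ ⊥ := by
    rw [hbmul]; exact mul_ne_zero hJ0 hM0
  have hbN : (Ideal.absNorm b : ℝ) = Ideal.absNorm (J : Ideal O) * M ^ 2 := by
    rw [hbmul, map_mul, Nat.cast_mul, hN, map_natCast, Complex.norm_natCast]
  have hJpos : (1:ℝ) ≤ Ideal.absNorm (J : Ideal O) := by
    exact_mod_cast Nat.one_le_iff_ne_zero.2 (by rw [Ne, Ideal.absNorm_eq_zero_iff]; exact hJ0)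
  have hJp : (0:ℝ) < Ideal.absNorm (J : Ideal O) := by linarith
  obtain ⟨hs, has⟩ := hth b hb0
  have hfun : ∀ (t : ℝ) (x : b), rexp (-(Ideal.absNorm ((e x).1 : Ideal O) * t)) =
      rexp (-((t / Ideal.absNorm (J : Ideal O)) * ‖φ (α0 + x)‖ ^ 2)) := by
    intro t x
    rw [← he x]
    congr 1
    field_simp
  refine ⟨fun t ht => ?_, fun N => ?_⟩
  · rw [← e.summable_iff]
    refine (hs α0 (t / Ideal.absNorm (J : Ideal O)) (by positivity)).congr fun x => ?_
    exact (hfun t x).symm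
  · obtain ⟨C, hC0, hC⟩ := has N
    refine ⟨C, fun t ht ht1 => ?_⟩
    have hle : t / Ideal.absNorm (J : Ideal O) ≤ t := div_le_self ht.le hJpos
    have h3 := hC (t / Ideal.absNorm (J : Ideal O)) (by positivity) (hle.trans ht1) α0
    have e1 : (∑' I : {I : rayIdeals O M // rayCls O M I = A}, rexp (-(Ideal.absNorm (I.1 : Ideal O) * t))) =
        thetaC φ b α0 (t / Ideal.absNorm (J : Ideal O)) := by
      rw [thetaC, ← e.tsum_eq]
      exact tsum_congr fun x => hfun t x
    have e2 : κ / M ^ 2 / t = κ / Ideal.absNorm b / (t / Ideal.absNorm (J : Ideal O)) := by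
      rw [hbN]; field_simp
    rw [e1, e2]
    refine h3.trans ?_
    gcongr
end RayTheta

end FileP3c

section FileP3d
open Real Set Filter Topology

section IdealLam
variable {O : Type*} [CommRing O] [IsDedekindDomain O] [Module.Free ℤ O] [Module.Finite ℤ O]

open Classical in
/-- the von Mangoldt function on ideals -/
noncomputable def idealLam (I : Ideal O) : ℝ :=
  if h : ∃ P : Ideal O, Prime P ∧ ∃ k : ℕ, 0 < k ∧ P ^ k = I then
    Real.log (Ideal.absNorm h.choose) else 0

lemma idealLam_nonneg (I : Ideal O) : 0 ≤ idealLam I := by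
  unfold idealLam
  split_ifs
  · exact Real.log_natCast_nonneg _
  · exact le_rfl

lemma idealLam_pow {P : Ideal O} (hP : Prime P) {k : ℕ} (hk : 0 < k) :
    idealLam (P ^ k) = Real.log (Ideal.absNorm P) := by
  have h : ∃ Q : Ideal O, Prime Q ∧ ∃ j : ℕ, 0 < j ∧ Q ^ j = P ^ k := ⟨P, hP, k, hk, rfl⟩
  unfold idealLam
  rw [dif_pos h]
  obtain ⟨hQ, j, hj, hjk⟩ := h.choose_spec
  have h1 : h.choose ∣ P := hQ.dvd_of_dvd_pow (n := k) ((dvd_pow_self _ hj.ne').trans hjk.dvd)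
  have h2 : h.choose = P := associated_iff_eq.1 (hQ.associated_of_dvd hP h1)
  rw [h2]

lemma idealLam_ne_zero {I : Ideal O} (h : idealLam I ≠ 0) :
    ∃ P : Ideal O, Prime P ∧ ∃ k : ℕ, 0 < k ∧ P ^ k = I := by
  unfold idealLam at h
  by_contra h'
  rw [dif_neg h'] at h
  exact h rfl

lemma sum_idealLam (I : Ideal O) : I ≠ 0 → ∀ S : Finset (Ideal O), (∀ J, J ∈ S ↔ J ∣ I) →
    ∑ J ∈ S, idealLam J = Real.log (Ideal.absNorm I) := by
  classical
  induction I using UniqueFactorizationMonoid.induction_on_prime with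
  | h₁ => exact fun h => absurd rfl h
  | h₂ x hx =>
    intro _ S hS
    have hx1 : x = 1 := by rw [Ideal.one_eq_top]; exact Ideal.isUnit_iff.1 hx
    subst hx1
    rw [Finset.sum_eq_zero, Ideal.one_eq_top, Ideal.absNorm_top]
    · simp
    · intro J hJ
      rw [hS] at hJ
      by_contra h
      obtain ⟨P, hP, k, hk, rfl⟩ := idealLam_ne_zero h
      exact hP.not_isUnit (isUnit_of_dvd_one ((dvd_pow_self P hk.ne').trans hJ))
  | h₃ a P ha hP ih =>
    intro _ S hS
    obtain ⟨c, hc, hac⟩ : ∃ c, ¬ P ∣ c ∧ a = P ^ (multiplicity P a) * c := by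
      obtain ⟨c, h1, h2⟩ := (FiniteMultiplicity.of_prime_left hP ha).exists_eq_pow_mul_and_not_dvd
      exact ⟨c, h2, h1⟩
    set v := multiplicity P a
    have hih := ih ha (S.filter (· ∣ a)) (by
      intro J
      rw [Finset.mem_filter, hS]
      exact ⟨fun h => h.2, fun h => ⟨h.mul_left P, h⟩⟩)
    rw [← Finset.sum_filter_add_sum_filter_not S (· ∣ a), hih]
    have hv : ¬ P ^ (v + 1) ∣ a := by
      intro h
      rw [hac, pow_succ] at h
      exact hc ((mul_dvd_mul_iff_left (pow_ne_zero v hP.ne_zero)).1 h)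
    have h3 : ∑ J ∈ S.filter (¬ · ∣ a), idealLam J = idealLam (P ^ (v + 1)) := by
      apply Finset.sum_eq_single_of_mem
      · rw [Finset.mem_filter, hS]
        refine ⟨?_, hv⟩
        rw [hac, pow_succ']
        exact mul_dvd_mul_left _ (Dvd.intro _ rfl)
      · intro J hJ hne
        rw [Finset.mem_filter, hS] at hJ
        by_contra h
        obtain ⟨Q, hQ, k, hk, rfl⟩ := idealLam_ne_zero h
        by_cases hQP : Q = P
        · subst hQP
          rcases lt_trichotomy k (v + 1) with h5 | h5 | h5
          · exact hJ.2 ((pow_dvd_pow Q (Nat.lt_succ_iff.1 h5)).trans ⟨c, hac⟩)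
          · exact hne (by rw [h5])
          · have h6 : Q ^ (v + 2) ∣ Q * a := (pow_dvd_pow Q h5).trans hJ.1
            rw [pow_succ'] at h6
            exact hv ((mul_dvd_mul_iff_left hP.ne_zero).1 h6)
        · apply hJ.2
          have hcop : IsCoprime Q P := by
            rw [Ideal.isCoprime_iff_sup_eq]
            have hQm := (Ideal.isPrime_of_prime hQ).isMaximal hQ.ne_zero
            have hPm := (Ideal.isPrime_of_prime hP).isMaximal hP.ne_zero
            exact hQm.coprime_of_ne hPm hQP
          exact (IsCoprime.pow_left hcop).dvd_of_dvd_mul_left hJ.1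
    rw [h3, idealLam_pow hP (Nat.succ_pos v), map_mul, Nat.cast_mul, Real.log_mul]
    · ring
    · rw [Nat.cast_ne_zero, Ne, Ideal.absNorm_eq_zero_iff]; exact hP.ne_zero
    · rw [Nat.cast_ne_zero, Ne, Ideal.absNorm_eq_zero_iff]; exact ha

lemma sum_idealLam_le (hrank : Module.finrank ℤ O = 2) (n : ℕ) (T : Finset (Ideal O))
    (hT : ∀ J ∈ T, Ideal.absNorm J = n) :
    ∑ J ∈ T, idealLam J ≤ 2 * ArithmeticFunction.vonMangoldt n := by
  classical
  rw [← Finset.sum_filter_ne_zero]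
  set S := T.filter (fun J => idealLam J ≠ 0) with hSdef
  rcases S.eq_empty_or_nonempty with hS | ⟨I0, hI0⟩
  · rw [hS, Finset.sum_empty]
    have := ArithmeticFunction.vonMangoldt_nonneg (n := n)
    linarith
  have key : ∀ J ∈ S, ∃ P : Ideal O, Prime P ∧ ∃ k : ℕ, 0 < k ∧ P ^ k = J := fun J hJ =>
    idealLam_ne_zero (Finset.mem_filter.1 hJ).2
  have keyN : ∀ P : Ideal O, Prime P → ∃ p m : ℕ, 0 < m ∧ (p : O) ∈ P ∧ p.Prime ∧ Ideal.absNorm P = p ^ m := by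
    intro P hP
    have hPm := (Ideal.isPrime_of_prime hP).isMaximal hP.ne_zero
    exact Ideal.exists_prime_and_absNorm_eq_pow P
  obtain ⟨P0, hP0, k0, hk0, h0⟩ := key I0 hI0
  obtain ⟨p, m0, hm0, hp0, hp, hNP0⟩ := keyN P0 hP0
  have hnp : n = p ^ (m0 * k0) := by
    rw [← hT I0 (Finset.mem_filter.1 hI0).1, ← h0, map_pow, hNP0, pow_mul]
  have hΛ : ArithmeticFunction.vonMangoldt n = Real.log p := by
    rw [hnp, ArithmeticFunction.vonMangoldt_apply_pow (by positivity),
      ArithmeticFunction.vonMangoldt_apply_prime hp]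
  choose! f hf k hk hfk using key
  have hfp : ∀ J ∈ S, f J ∣ Ideal.span {(p : O)} := by
    intro J hJ
    obtain ⟨q, m, hm, hq0, hq, hNP⟩ := keyN (f J) (hf J hJ)
    have h1 : p ^ (m0 * k0) = q ^ (m * k J) := by
      rw [← hnp, ← hT J (Finset.mem_filter.1 hJ).1, pow_mul, ← hNP, ← map_pow, hfk J hJ]
    have hpq : p = q := by
      have h2 : p ∣ q ^ (m * k J) := by rw [← h1]; exact dvd_pow_self p (by positivity)
      exact (Nat.prime_dvd_prime_iff_eq hp hq).1 (hp.dvd_of_dvd_pow h2)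
    subst hpq
    rw [Ideal.dvd_iff_le, Ideal.span_singleton_le_iff_mem]
    exact hq0
  have hinj : Set.InjOn f S := by
    intro J hJ L hL hJL
    have h1 : Ideal.absNorm (f J) ^ k J = Ideal.absNorm (f J) ^ k L := by
      rw [← map_pow, hfk J hJ, hT J (Finset.mem_filter.1 hJ).1]
      conv_rhs => rw [hJL, ← map_pow, hfk L hL, hT L (Finset.mem_filter.1 hL).1]
    obtain ⟨q, m, hm, hq0, hq, hNP⟩ := keyN (f J) (hf J hJ)
    have h2 : 2 ≤ Ideal.absNorm (f J) := by
      rw [hNP]; exact hq.two_le.trans (Nat.le_self_pow hm.ne' q)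
    have h3 := Nat.pow_right_injective h2 h1
    rw [← hfk J hJ, ← hfk L hL, hJL, h3]
  have hprod : ∏ P ∈ S.image f, P ∣ Ideal.span {(p : O)} := by
    apply Finset.prod_primes_dvd
    · intro P hP
      obtain ⟨J, hJ, rfl⟩ := Finset.mem_image.1 hP
      exact hf J hJ
    · intro P hP
      obtain ⟨J, hJ, rfl⟩ := Finset.mem_image.1 hP
      exact hfp J hJ
  rw [Finset.prod_image hinj] at hprod
  have hle : ∏ J ∈ S, Ideal.absNorm (f J) ≤ p ^ 2 := by
    have := Ideal.absNorm_dvd_absNorm_of_le (Ideal.dvd_iff_le.1 hprod)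
    rw [map_prod, Ideal.absNorm_span_natCast, hrank] at this
    exact Nat.le_of_dvd (pow_pos hp.pos 2) this
  have hpos : ∀ J ∈ S, Ideal.absNorm (f J) ≠ 0 := by
    intro J hJ
    rw [Ne, Ideal.absNorm_eq_zero_iff]
    exact (hf J hJ).ne_zero
  calc ∑ J ∈ S, idealLam J = ∑ J ∈ S, Real.log (Ideal.absNorm (f J)) := by
        apply Finset.sum_congr rfl
        intro J hJ
        conv_lhs => rw [← hfk J hJ]
        exact idealLam_pow (hf J hJ) (hk J hJ)
    _ = Real.log ((∏ J ∈ S, Ideal.absNorm (f J) : ℕ) : ℝ) := by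
        rw [Nat.cast_prod, Real.log_prod]
        intro J hJ
        exact Nat.cast_ne_zero.2 (hpos J hJ)
    _ ≤ Real.log ((p ^ 2 : ℕ) : ℝ) := by
        apply Real.log_le_log
        · exact_mod_cast Finset.prod_pos fun J hJ => Nat.pos_of_ne_zero (hpos J hJ)
        · exact_mod_cast hle
    _ = 2 * ArithmeticFunction.vonMangoldt n := by
        rw [hΛ]; push_cast; rw [Real.log_pow]; norm_num

end IdealLam

end FileP3d

section FileP3e
open Real Set Filter Topology

section Count
variable {O : Type*} [CommRing O] [IsDedekindDomain O] [Module.Free ℤ O] [Module.Finite ℤ O] [CharZero O]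

lemma finite_fib (M n : ℕ) : {I : rayIdeals O M | Ideal.absNorm (I : Ideal O) = n}.Finite := by
  have h := Ideal.finite_setOfPred_absNorm_eq (S := O) n
  exact h.preimage Subtype.val_injective.injOn

/-- ray ideals of given norm -/
noncomputable def fib (O : Type*) [CommRing O] [IsDedekindDomain O] [Module.Free ℤ O]
    [Module.Finite ℤ O] [CharZero O] (M n : ℕ) : Finset (rayIdeals O M) := (finite_fib (O := O) M n).toFinset

lemma mem_fib {M n : ℕ} {I : rayIdeals O M} : I ∈ fib O M n ↔ Ideal.absNorm (I : Ideal O) = n := by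
  simp [fib]

open Classical in
/-- counting function -/
noncomputable def rCount {G : Type*} {M : ℕ} (cls : rayIdeals O M → G) (A : G) (n : ℕ) : ℝ :=
  ∑ I ∈ fib O M n, if cls I = A then 1 else 0

open Classical in
/-- counting function -/
noncomputable def lCount {G : Type*} {M : ℕ} (cls : rayIdeals O M → G) (A : G) (n : ℕ) : ℝ :=
  ∑ I ∈ fib O M n, if cls I = A then idealLam (I : Ideal O) else 0

lemma hasSum_rCount {G : Type*} {M : ℕ} (cls : rayIdeals O M → G) (A : G) (t : ℝ)
    (hs : Summable fun I : {I : rayIdeals O M // cls I = A} => rexp (-(Ideal.absNorm (I.1 : Ideal O) * t))) :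
    HasSum (fun n : ℕ => rCount cls A n * rexp (-(n * t)))
      (∑' I : {I : rayIdeals O M // cls I = A}, rexp (-(Ideal.absNorm (I.1 : Ideal O) * t))) := by
  classical
  have h1 := hs.hasSum
  have h2 := (hasSum_subtype_iff_indicator (f := fun I : rayIdeals O M => rexp (-(Ideal.absNorm (I : Ideal O) * t)))
    (s := {I | cls I = A})).1 h1
  have h3 := h2.tsum_fiberwise (fun I : rayIdeals O M => Ideal.absNorm (I : Ideal O))
  refine (congrArg (fun f => HasSum f _) (funext fun n => ?_)).mpr h3
  have h4 : (fun I : rayIdeals O M => Ideal.absNorm (I : Ideal O)) ⁻¹' {n} = (fib O M n : Set (rayIdeals O M)) := by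
    ext I
    simp [mem_fib]
  rw [h4, Finset.tsum_subtype', rCount, Finset.sum_mul]
  apply Finset.sum_congr rfl
  intro I hI
  rw [mem_fib] at hI
  simp only [Set.indicator, Set.mem_setOf_eq, hI]
  split_ifs <;> simp

lemma rec_count {G : Type*} [CommGroup G] [Fintype G] {M : ℕ} (hM : ¬ IsUnit (M : O)) (cls : rayIdeals O M →* G) (A : G)
    (n : ℕ) (hn : n ≠ 0) : rCount cls A n * Real.log n =
    ∑ p ∈ n.divisorsAntidiagonal, ∑ B, rCount cls B p.1 * lCount cls (B⁻¹ * A) p.2 := by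
  classical
  let U : Finset (rayIdeals O M) := (Finset.range (n + 1)).biUnion (fib O M)
  let P : Finset (rayIdeals O M × rayIdeals O M) := (U ×ˢ U).filter
    fun p => Ideal.absNorm (p.1 : Ideal O) * Ideal.absNorm (p.2 : Ideal O) = n
  have hP : ∀ p, p ∈ P ↔ Ideal.absNorm (p.1 : Ideal O) * Ideal.absNorm (p.2 : Ideal O) = n := by
    intro p
    simp only [P, U, Finset.mem_filter, Finset.mem_product, Finset.mem_biUnion, Finset.mem_range, mem_fib,
      and_iff_right_iff_imp]
    intro h
    refine ⟨⟨_, ?_, rfl⟩, ⟨_, ?_, rfl⟩⟩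
    · exact Nat.lt_succ_of_le (Nat.le_of_dvd (Nat.pos_of_ne_zero hn) (h ▸ Dvd.intro _ rfl))
    · exact Nat.lt_succ_of_le (Nat.le_of_dvd (Nat.pos_of_ne_zero hn) (h ▸ Dvd.intro_left _ rfl))
  let F : rayIdeals O M × rayIdeals O M → ℝ := fun p =>
    if cls (p.1 * p.2) = A then idealLam (p.2 : Ideal O) else 0
  have hR : ∑ p ∈ n.divisorsAntidiagonal, ∑ B, rCount cls B p.1 * lCount cls (B⁻¹ * A) p.2 = ∑ p ∈ P, F p := by
    rw [← Finset.sum_fiberwise_of_maps_to (s := P) (t := n.divisorsAntidiagonal)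
      (g := fun p => (Ideal.absNorm (p.1 : Ideal O), Ideal.absNorm (p.2 : Ideal O)))
      (fun p hp => Nat.mem_divisorsAntidiagonal.2 ⟨(hP p).1 hp, hn⟩) F]
    apply Finset.sum_congr rfl
    intro de hde
    have h1 : P.filter (fun p => (Ideal.absNorm (p.1 : Ideal O), Ideal.absNorm (p.2 : Ideal O)) = de)
        = fib O M de.1 ×ˢ fib O M de.2 := by
      ext p
      rw [Finset.mem_filter, hP, Finset.mem_product, mem_fib, mem_fib, Prod.ext_iff]
      constructor
      · exact fun h => h.2
      · intro h
        refine ⟨?_, h⟩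
        rw [h.1, h.2]
        exact (Nat.mem_divisorsAntidiagonal.1 hde).1
    rw [h1, Finset.sum_product]
    simp only [rCount, lCount, Finset.sum_mul_sum]
    rw [Finset.sum_comm]
    apply Finset.sum_congr rfl
    intro J _
    rw [Finset.sum_comm]
    apply Finset.sum_congr rfl
    intro L _
    rw [Finset.sum_eq_single_of_mem (cls J) (Finset.mem_univ _)]
    · simp only [F, map_mul, if_true, one_mul]
      congr 1
      rw [eq_inv_mul_iff_mul_eq]
    · intro B _ hB
      rw [if_neg hB.symm, zero_mul]
  rw [hR, ← Finset.sum_fiberwise_of_maps_to (s := P) (t := fib O M n) (g := fun p => p.1 * p.2)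
    (fun p hp => by rw [mem_fib, Submonoid.coe_mul, map_mul]; exact (hP p).1 hp) F, rCount, Finset.sum_mul]
  apply Finset.sum_congr rfl
  intro I hI
  rw [mem_fib] at hI
  have hI0 : (I : Ideal O) ≠ 0 := by
    intro h
    apply hn
    rw [← hI, Ideal.absNorm_eq_zero_iff]
    exact h
  have h2 : ∑ p ∈ P.filter (fun p => p.1 * p.2 = I), F p =
      ∑ p ∈ P.filter (fun p => p.1 * p.2 = I), (if cls I = A then 1 else 0) * idealLam (p.2 : Ideal O) := by
    apply Finset.sum_congr rfl
    intro p hp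
    rw [Finset.mem_filter] at hp
    simp only [F, hp.2, ite_mul, one_mul, zero_mul]
  rw [h2, ← Finset.mul_sum]
  congr 1
  rw [← hI, ← sum_idealLam (I : Ideal O) hI0 ((P.filter (fun p => p.1 * p.2 = I)).image fun p => (p.2 : Ideal O))]
  · rw [Finset.sum_image]
    rintro ⟨J, L⟩ hp ⟨J', L'⟩ hp' h
    rw [Finset.mem_coe, Finset.mem_filter] at hp hp'
    have hLL : L = L' := Subtype.ext h
    subst hLL
    have h5 : (J : Ideal O) * L = J' * L := by
      have := hp.2.trans hp'.2.symm
      exact congrArg Subtype.val this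
    have hL0 : (L : Ideal O) ≠ 0 := by
      intro h0
      apply hI0
      rw [← hp.2, Submonoid.coe_mul, h0, mul_zero]
    rw [Subtype.ext (mul_right_cancel₀ hL0 h5)]
  · intro K
    rw [Finset.mem_image]
    constructor
    · rintro ⟨p, hp, rfl⟩
      rw [Finset.mem_filter] at hp
      exact ⟨p.1, by rw [← hp.2, Submonoid.coe_mul, mul_comm]⟩
    · rintro ⟨J, hJ⟩
      have hIc : IsCoprime (I : Ideal O) (Ideal.span {(M : O)}) := I.2
      rw [hJ] at hIc
      refine ⟨(⟨J, hIc.of_mul_left_right⟩, ⟨K, hIc.of_mul_left_left⟩), ?_, rfl⟩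
      rw [Finset.mem_filter, hP]
      refine ⟨?_, ?_⟩
      · rw [← map_mul, mul_comm, ← hJ, hI]
      · apply Subtype.ext
        rw [Submonoid.coe_mul, hJ, mul_comm]

lemma ray_primes_abs {G : Type*} [CommGroup G] [Fintype G] {M : ℕ} (hM : ¬ IsUnit (M : O))
    (cls : rayIdeals O M →* G) (hrank : Module.finrank ℤ O = 2) {κ : ℝ} (hκ : 0 < κ)
    (hθ : ∀ A : G, (∀ t : ℝ, 0 < t → Summable fun I : {I : rayIdeals O M // cls I = A} =>
        rexp (-(Ideal.absNorm (I.1 : Ideal O) * t))) ∧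
      ∀ N : ℕ, ∃ C : ℝ, ∀ t : ℝ, 0 < t → t ≤ 1 →
        |(∑' I : {I : rayIdeals O M // cls I = A}, rexp (-(Ideal.absNorm (I.1 : Ideal O) * t))) - κ / t| ≤ C * t ^ N)
    (A0 : G) : ∃ p : ℕ, p.Prime ∧ ∃ I : rayIdeals O M, cls I = A0 ∧ Ideal.absNorm (I : Ideal O) = p := by
  classical
  have hr0 : ∀ A, rCount cls A 0 = 0 := by
    intro A
    apply Finset.sum_eq_zero
    intro I hI
    rw [mem_fib, Ideal.absNorm_eq_zero_iff] at hI
    exact absurd hI (ray_ne_bot hM I.2)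
  have hone : ∀ I : rayIdeals O M, I ∈ fib O M 1 ↔ I = 1 := by
    intro I
    rw [mem_fib, Ideal.absNorm_eq_one_iff, ← Ideal.one_eq_top]
    exact ⟨fun h => Subtype.ext h, fun h => by rw [h]; rfl⟩
  have hfib1 : fib O M 1 = {1} := by
    ext I
    rw [hone, Finset.mem_singleton]
  obtain ⟨p, hp, hl⟩ := analytic_core (fun A => rCount cls A) (fun A => lCount cls A) (κ := κ) (K := 2) hκ hr0
    (fun A n => Finset.sum_nonneg fun I _ => by split_ifs <;> norm_num)
    (fun A t ht => (hasSum_rCount cls A t ((hθ A).1 t ht)).summable)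
    (fun A N => by
      obtain ⟨C, hC⟩ := (hθ A).2 N
      refine ⟨C, fun t ht ht1 => ?_⟩
      rw [(hasSum_rCount cls A t ((hθ A).1 t ht)).tsum_eq]
      exact hC t ht ht1)
    (by rw [rCount, hfib1, Finset.sum_singleton, map_one, if_pos rfl])
    (fun A hA => by simp [rCount, hfib1, hA.symm])
    (fun A n => Finset.sum_nonneg fun I _ => by split_ifs; exacts [idealLam_nonneg _, le_rfl])
    (fun A n => by
      refine le_trans ?_ (sum_idealLam_le hrank n ((fib O M n).map ⟨Subtype.val, Subtype.val_injective⟩) ?_)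
      · rw [Finset.sum_map, lCount]
        apply Finset.sum_le_sum
        intro I _
        split_ifs
        · exact le_rfl
        · exact idealLam_nonneg _
      · intro J hJ
        obtain ⟨I, hI, rfl⟩ := Finset.mem_map.1 hJ
        exact mem_fib.1 hI)
    (fun A n => by
      rcases eq_or_ne n 0 with rfl | hn
      · simp
      · exact rec_count hM cls A n hn) A0
  refine ⟨p, hp, ?_⟩
  obtain ⟨I, hI, h⟩ := Finset.exists_ne_zero_of_sum_ne_zero hl
  refine ⟨I, ?_, mem_fib.1 hI⟩
  by_contra h'
  rw [if_neg h'] at h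
  exact h rfl

theorem ray_primes (φ : O →+* ℂ) (hN : ∀ α : O, (Ideal.absNorm (Ideal.span {α}) : ℝ) = ‖φ α‖ ^ 2)
    (hrank : Module.finrank ℤ O = 2) (hγ : ∃ γ, (φ γ).im ≠ 0) {M : ℕ} (hM : 3 ≤ M)
    [Finite (ClassGroup O)] (J : Ideal O) (hJ : J ∈ rayIdeals O M) :
    ∃ p : ℕ, p.Prime ∧ ∃ I : Ideal O, Ideal.absNorm I = p ∧ ∃ α, cong1 M α ∧ I * J = Ideal.span {α} := by
  have hM' := not_unit_M φ hN hM
  obtain ⟨κ, hκ, hθ⟩ := ray_theta φ hN hrank hγ hM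
  haveI : Finite (O ⧸ Ideal.span {(M:O)}) := by
    apply Ideal.finiteQuotientOfFreeOfNeBot
    rw [Ne, Ideal.span_singleton_eq_bot]
    exact_mod_cast (by omega : M ≠ 0)
  haveI := rayCl_finite (O := O) hM'
  letI : CommGroup (RayCl O M) := commGroupOfIsUnit (rayCls_isUnit hM')
  letI : Fintype (RayCl O M) := Fintype.ofFinite _
  obtain ⟨p, hp, I, hI, hIp⟩ := ray_primes_abs hM' (rayCls O M) hrank hκ hθ (rayCls O M ⟨J, hJ⟩)⁻¹
  refine ⟨p, hp, I, hIp, ?_⟩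
  have h1 : rayCls O M (I * ⟨J, hJ⟩) = 1 := by
    rw [map_mul, hI]
    exact inv_mul_cancel (rayCls O M ⟨J, hJ⟩)
  exact (rayCls_eq_one_iff hM' _).1 h1

end Count

end FileP3e

section FileP4a
open Real Set Filter Topology

section FormRed

lemma dvd_prod_primes (S : Finset ℕ) (hS : ∀ p ∈ S, p.Prime) {q : ℕ} (hq : q.Prime) :
    (q : ℤ) ∣ ((∏ p ∈ S, p : ℕ) : ℤ) ↔ q ∈ S := by
  rw [Int.natCast_dvd_natCast, hq.prime.dvd_finsetProd_iff]
  constructor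
  · rintro ⟨p, hp, h⟩
    rwa [(Nat.prime_dvd_prime_iff_eq hq (hS p hp)).1 h]
  · exact fun h => ⟨q, h, dvd_rfl⟩

lemma exists_coprime_value (a b c : ℤ) (hprim : Int.gcd a (Int.gcd b c) = 1) (M : ℕ) (hM : M ≠ 0) :
    ∃ u v : ℤ, IsCoprime u v ∧ IsCoprime (a * u ^ 2 + b * u * v + c * v ^ 2) (M : ℤ) := by
  classical
  set S := M.primeFactors.filter (fun p : ℕ => (p : ℤ) ∣ a ∧ ¬ (p : ℤ) ∣ c) with hS
  set T := M.primeFactors.filter (fun p : ℕ => ¬ (p : ℤ) ∣ a) with hT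
  have hSp : ∀ p ∈ S, p.Prime := fun p hp => Nat.prime_of_mem_primeFactors (Finset.mem_filter.1 hp).1
  have hTp : ∀ p ∈ T, p.Prime := fun p hp => Nat.prime_of_mem_primeFactors (Finset.mem_filter.1 hp).1
  have hcop : ∀ x y : ℤ, (∀ q : ℕ, q.Prime → (q : ℤ) ∣ x → (q : ℤ) ∣ y → False) → IsCoprime x y := by
    intro x y h
    rw [Int.isCoprime_iff_gcd_eq_one]
    by_contra hne
    obtain ⟨q, hq, hd⟩ := Nat.exists_prime_and_dvd hne
    have hd' : (q : ℤ) ∣ (Int.gcd x y : ℤ) := Int.natCast_dvd_natCast.2 hd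
    exact h q hq (hd'.trans (Int.gcd_dvd_left ..)) (hd'.trans (Int.gcd_dvd_right ..))
  have hu : ∀ q : ℕ, q.Prime → ((q : ℤ) ∣ ((∏ p ∈ S, p : ℕ) : ℤ) ↔ q ∈ S) := fun q hq => dvd_prod_primes S hSp hq
  have hv : ∀ q : ℕ, q.Prime → ((q : ℤ) ∣ ((∏ p ∈ T, p : ℕ) : ℤ) ↔ q ∈ T) := fun q hq => dvd_prod_primes T hTp hq
  generalize ((∏ p ∈ S, p : ℕ) : ℤ) = u at hu
  generalize ((∏ p ∈ T, p : ℕ) : ℤ) = v at hv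
  refine ⟨u, v, hcop _ _ ?_, hcop _ _ ?_⟩
  · intro q hq h1 h2
    rw [hu q hq, hS, Finset.mem_filter] at h1
    rw [hv q hq, hT, Finset.mem_filter] at h2
    exact h2.2 h1.2.1
  · intro q hq h1 h2
    have hqM : q ∈ M.primeFactors := Nat.mem_primeFactors.2 ⟨hq, Int.natCast_dvd_natCast.1 h2, hM⟩
    have hu := hu q hq
    have hv := hv q hq
    have hqp : Prime (q : ℤ) := Nat.prime_iff_prime_int.1 hq
    rw [hS, Finset.mem_filter] at hu
    rw [hT, Finset.mem_filter] at hv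
    by_cases hqa : (q : ℤ) ∣ a
    · have hv' : ¬ (q : ℤ) ∣ v := fun h => (hv.1 h).2 hqa
      by_cases hqc : (q : ℤ) ∣ c
      · have hu' : ¬ (q : ℤ) ∣ u := fun h => (hu.1 h).2.2 hqc
        have h3 : (q : ℤ) ∣ b * u * v := by
          have h4 : (q : ℤ) ∣ a * u ^ 2 := hqa.mul_right _
          have h5 : (q : ℤ) ∣ c * v ^ 2 := hqc.mul_right _
          have := dvd_sub (dvd_sub h1 h4) h5
          have e : b * u * v = a * u ^ 2 + b * u * v + c * v ^ 2 - a * u ^ 2 - c * v ^ 2 := by ring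
          rw [e]; exact this
        have hqb : (q : ℤ) ∣ b := ((hqp.dvd_or_dvd h3).resolve_right hv' |> hqp.dvd_or_dvd).resolve_right hu'
        have h6 : (q : ℤ) ∣ (Int.gcd a (Int.gcd b c) : ℤ) := Int.dvd_coe_gcd hqa (Int.dvd_coe_gcd hqb hqc)
        rw [hprim] at h6
        exact hqp.not_isUnit (isUnit_of_dvd_one (by simpa using h6))
      · have hu' : (q : ℤ) ∣ u := hu.2 ⟨hqM, hqa, hqc⟩
        have h3 : (q : ℤ) ∣ c * v ^ 2 := by
          have := dvd_sub h1 (hu'.mul_right (a * u + b * v))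
          have e : c * v ^ 2 = a * u ^ 2 + b * u * v + c * v ^ 2 - u * (a * u + b * v) := by ring
          rw [e]; exact this
        exact hv' (hqp.dvd_of_dvd_pow ((hqp.dvd_or_dvd h3).resolve_left hqc))
    · have hv' : (q : ℤ) ∣ v := hv.2 ⟨hqM, hqa⟩
      have hu' : ¬ (q : ℤ) ∣ u := fun h => hqa (hu.1 h).2.1
      have h3 : (q : ℤ) ∣ a * u ^ 2 := by
        have := dvd_sub h1 (hv'.mul_right (c * v + b * u))
        have e : a * u ^ 2 = a * u ^ 2 + b * u * v + c * v ^ 2 - v * (c * v + b * u) := by ring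
        rw [e]; exact this
      exact hu' (hqp.dvd_of_dvd_pow ((hqp.dvd_or_dvd h3).resolve_left hqa))

lemma form_red (a b c : ℤ) (hprim : Int.gcd a (Int.gcd b c) = 1) (ha : 0 < a)
    (hdisc : b ^ 2 - 4 * a * c < 0) (M : ℕ) (hM : M ≠ 0) :
    ∃ a' b' c' : ℤ, 0 < a' ∧ b' ^ 2 - 4 * a' * c' = b ^ 2 - 4 * a * c ∧ IsCoprime a' (M : ℤ) ∧
      ∀ x y : ℤ, ∃ x' y' : ℤ, a * x' ^ 2 + b * x' * y' + c * y' ^ 2 = a' * x ^ 2 + b' * x * y + c' * y ^ 2 := by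
  obtain ⟨u, v, huv, hco⟩ := exists_coprime_value a b c hprim M hM
  obtain ⟨s, r, hsr⟩ := huv
  refine ⟨a * u ^ 2 + b * u * v + c * v ^ 2, -2 * a * u * r + b * (u * s - r * v) + 2 * c * v * s,
    a * r ^ 2 - b * r * s + c * s ^ 2, ?_, ?_, hco, fun x y => ⟨u * x - r * y, v * x + s * y, by ring⟩⟩
  · have h1 : 0 < (2 * a * u + b * v) ^ 2 + (4 * a * c - b ^ 2) * v ^ 2 := by
      rcases eq_or_ne v 0 with rfl | hv
      · have hu : u ≠ 0 := by rintro rfl; simp at hsr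
        have : 0 < (2 * a * u) ^ 2 := by positivity
        simpa using this
      · have : 0 < v ^ 2 := by positivity
        nlinarith [sq_nonneg (2 * a * u + b * v)]
    have h2 : (2 * a * u + b * v) ^ 2 + (4 * a * c - b ^ 2) * v ^ 2 = 4 * a * (a * u ^ 2 + b * u * v + c * v ^ 2) := by ring
    rw [h2] at h1
    exact pos_of_mul_pos_right h1 (by linarith)
  · have : (-2 * a * u * r + b * (u * s - r * v) + 2 * c * v * s) ^ 2
      - 4 * (a * u ^ 2 + b * u * v + c * v ^ 2) * (a * r ^ 2 - b * r * s + c * s ^ 2)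
      = (b ^ 2 - 4 * a * c) * (s * u + r * v) ^ 2 := by ring
    rw [this, hsr]; ring

end FormRed

end FileP4a

section FileP4b
open Real Set Filter Topology

section FormIdeal
variable {O : Type*} [CommRing O] [IsDedekindDomain O] [Module.Free ℤ O] [Module.Finite ℤ O] [CharZero O]

lemma order_contains (φ : O →+* ℂ) (hN : ∀ α : O, (Ideal.absNorm (Ideal.span {α}) : ℝ) = ‖φ α‖ ^ 2)
    {a b c : ℤ} {s : ℝ} (hs0 : 0 < s) (hs : s ^ 2 = 4 * a * c - b ^ 2) {τ : O} (hre : (φ τ).re = -b / 2)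
    (him : (φ τ).im = s / 2) (β : O) :
    ∃ m n : ℤ, ((4 * a * c - b ^ 2 : ℤ) : O) * β = m + n * τ := by
  have hsq : ∀ α : O, (Ideal.absNorm (Ideal.span {α}) : ℝ) = (φ α).re ^ 2 + (φ α).im ^ 2 := by
    intro α
    rw [hN, ← Complex.normSq_eq_norm_sq, Complex.normSq_apply]; ring
  obtain ⟨u, hu⟩ : ∃ u : ℤ, (u : ℝ) = 2 * (φ β).re := by
    refine ⟨(Ideal.absNorm (Ideal.span {β + 1}) : ℤ) - Ideal.absNorm (Ideal.span {β}) - 1, ?_⟩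
    push_cast
    rw [hsq, hsq]
    simp
    ring
  obtain ⟨v, hv⟩ : ∃ v : ℤ, (v : ℝ) = 2 * ((φ β).re * (φ τ).re + (φ β).im * (φ τ).im) := by
    refine ⟨(Ideal.absNorm (Ideal.span {β + τ}) : ℤ) - Ideal.absNorm (Ideal.span {β}) - Ideal.absNorm (Ideal.span {τ}), ?_⟩
    push_cast
    rw [hsq, hsq, hsq]
    simp
    ring
  rw [hre, him] at hv
  refine ⟨2 * a * c * u + v * b, 2 * v + b * u, phi_inj φ hN ?_⟩
  apply Complex.ext
  · rw [map_mul, map_add, map_mul, map_intCast, map_intCast, map_intCast, Complex.add_re, Complex.mul_re,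
      Complex.mul_re, Complex.intCast_re, Complex.intCast_im, Complex.intCast_re, Complex.intCast_re,
      Complex.intCast_im, hre, him]
    push_cast
    rw [hv, hu]
    ring
  · rw [map_mul, map_add, map_mul, map_intCast, map_intCast, map_intCast, Complex.add_im, Complex.mul_im,
      Complex.mul_im, Complex.intCast_re, Complex.intCast_im, Complex.intCast_im, Complex.intCast_re,
      Complex.intCast_im, hre, him]
    push_cast
    rw [hv, hu, ← hs]
    ring

lemma coeff_unique (φ : O →+* ℂ) {s : ℝ} (hs0 : 0 < s) {τ : O} (him : (φ τ).im = s / 2) {m n m' n' : ℤ}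
    (h : (m : O) + n * τ = m' + n' * τ) : m = m' ∧ n = n' := by
  have h1 := congrArg φ h
  rw [map_add, map_add, map_mul, map_mul, map_intCast, map_intCast, map_intCast, map_intCast] at h1
  have h2 := congrArg Complex.im h1
  simp only [Complex.add_im, Complex.mul_im, Complex.intCast_im, Complex.intCast_re, him] at h2
  have h3 : n = n' := by
    have : (n : ℝ) = n' := by
      have : (n - n' : ℝ) * s = 0 := by linarith
      rcases mul_eq_zero.1 this with h | h <;> linarith
    exact_mod_cast this
  subst h3
  have h4 := congrArg Complex.re (add_right_cancel h1)
  rw [Complex.intCast_re, Complex.intCast_re] at h4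
  exact ⟨by exact_mod_cast h4, rfl⟩

theorem form_prime (φ : O →+* ℂ) (hN : ∀ α : O, (Ideal.absNorm (Ideal.span {α}) : ℝ) = ‖φ α‖ ^ 2)
    (hrank : Module.finrank ℤ O = 2) [Finite (ClassGroup O)]
    {a b c : ℤ} (ha : 0 < a) {M : ℕ} (hM3 : 3 ≤ M) (hMD : (4 * a * c - b ^ 2) ∣ (M : ℤ)) (hcop : IsCoprime a (M : ℤ))
    {s : ℝ} (hs0 : 0 < s) (hs : s ^ 2 = 4 * a * c - b ^ 2) {τ : O} (hre : (φ τ).re = -b / 2)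
    (him : (φ τ).im = s / 2) :
    ∃ p : ℕ, p.Prime ∧ ∃ x y : ℤ, a * x ^ 2 + b * x * y + c * y ^ 2 = p := by
  have hinj := phi_inj φ hN
  have hτ : τ * τ = -(b : O) * τ - a * c := by
    apply hinj
    apply Complex.ext
    · simp only [map_mul, map_sub, map_neg, map_intCast, Complex.sub_re, Complex.mul_re, Complex.neg_re,
        Complex.neg_im, Complex.intCast_re, Complex.intCast_im, hre, him]
      linear_combination (-1/4) * hs
    · simp only [map_mul, map_sub, map_neg, map_intCast, Complex.sub_im, Complex.mul_im, Complex.neg_re,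
        Complex.neg_im, Complex.intCast_re, Complex.intCast_im, hre, him]
      ring
  have hR : ∀ β : O, ∃ m n : ℤ, (M : O) * β = m + n * τ := by
    intro β
    obtain ⟨m, n, h⟩ := order_contains φ hN hs0 hs hre him β
    obtain ⟨k, hk⟩ := hMD
    refine ⟨k * m, k * n, ?_⟩
    have hk' : (M : O) = ((4 * a * c - b ^ 2 : ℤ) : O) * (k : O) := by
      rw [← Int.cast_mul, ← hk, Int.cast_natCast]
    rw [hk', Int.cast_mul, Int.cast_mul]
    linear_combination (k : O) * h
  obtain ⟨e, g, heg⟩ := hcop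
  set J : Ideal O := Ideal.span {(a : O), τ} with hJdef
  have haJ : (a : O) ∈ J := Ideal.subset_span (by simp)
  have hτJ : τ ∈ J := Ideal.subset_span (by simp)
  have hegO : (e : O) * a + g * M = 1 := by exact_mod_cast congrArg (Int.cast : ℤ → O) heg
  have hJ : J ∈ rayIdeals O M := by
    change IsCoprime J (Ideal.span {(M : O)})
    rw [Ideal.isCoprime_iff_exists]
    exact ⟨e * a, J.mul_mem_left _ haJ, g * M, Ideal.mul_mem_left _ _ (Ideal.mem_span_singleton_self _), hegO⟩
  have hJR : ∀ m n : ℤ, (m : O) + n * τ ∈ J → a ∣ m := by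
    intro m n h
    rw [hJdef, Ideal.mem_span_pair] at h
    obtain ⟨β, γ, h⟩ := h
    obtain ⟨m1, n1, h1⟩ := hR β
    obtain ⟨m2, n2, h2⟩ := hR γ
    have h3 : (((M : ℤ) * m : ℤ) : O) + ((M * n : ℤ) : O) * τ =
        ((a * m1 - a * c * n2 : ℤ) : O) + ((a * n1 + m2 - b * n2 : ℤ) : O) * τ := by
      push_cast
      linear_combination (-(M : O)) * h + (a : O) * h1 + τ * h2 + (n2 : O) * hτ
    have h4 := (coeff_unique φ hs0 him h3).1
    have h5 : m = a * (e * m + g * (m1 - c * n2)) := by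
      linear_combination (-m) * heg + g * h4
    exact ⟨_, h5⟩
  have hNJ : (Ideal.absNorm J : ℤ) = a := by
    let f : ℤ →+* O ⧸ J := Int.castRingHom _
    have hf : Function.Surjective f := by
      intro z
      obtain ⟨β, rfl⟩ := Ideal.Quotient.mk_surjective z
      obtain ⟨m, n, h⟩ := hR β
      refine ⟨g * m, ?_⟩
      have : f (g * m) = Ideal.Quotient.mk J ((g * m : ℤ) : O) := by simp [f]
      rw [this, Ideal.Quotient.eq]
      have h6 : ((g * m : ℤ) : O) - β = -(e * β) * a + -(g * n) * τ := by
        push_cast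
        linear_combination β * hegO + (-(g : O)) * h
      rw [h6]
      exact J.add_mem (J.mul_mem_left _ haJ) (J.mul_mem_left _ hτJ)
    have hker : RingHom.ker f = Ideal.span {a} := by
      ext m
      rw [RingHom.mem_ker, Ideal.mem_span_singleton]
      have : f m = Ideal.Quotient.mk J ((m : ℤ) : O) := by simp [f]
      rw [this, Ideal.Quotient.eq_zero_iff_mem]
      constructor
      · intro h
        exact hJR m 0 (by simpa using h)
      · rintro ⟨k, rfl⟩
        rw [Int.cast_mul]
        exact J.mul_mem_right _ haJ
    have e1 := (RingHom.quotientKerEquivOfSurjective hf).toEquiv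
    have e2 := (Ideal.quotEquivOfEq hker).toEquiv
    have e3 := (Int.quotientSpanEquivZMod a).toEquiv
    have h7 : Nat.card (O ⧸ J) = a.natAbs := by
      rw [← Nat.card_congr e1, Nat.card_congr e2, Nat.card_congr e3, Nat.card_zmod]
    have h8 : Ideal.absNorm J = Nat.card (O ⧸ J) := by
      rw [Ideal.absNorm_apply]; rfl
    rw [h8, h7, Int.natCast_natAbs, abs_of_pos ha]
  obtain ⟨p, hp, I, hI, α, hα1, hα⟩ := ray_primes φ hN hrank ⟨τ, by rw [him]; positivity⟩ hM3 J hJ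
  refine ⟨p, hp, ?_⟩
  obtain ⟨β, hβ⟩ := hα1
  obtain ⟨m, n, hmn⟩ := hR β
  have hα2 : α = ((m + 1 : ℤ) : O) + n * τ := by
    push_cast
    linear_combination hβ + hmn
  have hαJ : α ∈ J := mem_right_of_mem_mul (I := I) (by rw [hα]; exact Ideal.mem_span_singleton_self α)
  rw [hα2] at hαJ
  obtain ⟨x, hx⟩ := hJR _ _ hαJ
  rw [hx] at hα2
  refine ⟨x, -n, ?_⟩
  have h9 := hN α
  rw [← hα, map_mul, hI, ← Complex.normSq_eq_norm_sq, Complex.normSq_apply, hα2] at h9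
  have h10 : ((Ideal.absNorm J : ℕ) : ℝ) = a := by exact_mod_cast congrArg (Int.cast : ℤ → ℝ) hNJ
  rw [Nat.cast_mul, h10] at h9
  simp only [map_add, map_mul, map_intCast, Complex.add_re, Complex.add_im, Complex.mul_re, Complex.mul_im,
    Complex.intCast_re, Complex.intCast_im, hre, him] at h9
  push_cast at h9
  have h11 : (a : ℝ) * (a * x ^ 2 + b * x * (-n) + c * (-n) ^ 2) = a * p := by
    linear_combination -h9 - (n : ℝ) ^ 2 / 4 * hs
  have ha0 : (a : ℝ) ≠ 0 := by exact_mod_cast ha.ne'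
  have h12 := mul_left_cancel₀ ha0 h11
  exact_mod_cast h12

end FormIdeal

end FileP4b

section FileP4c
open Real Set Filter Topology NumberField

section QuadField

lemma quad_norm (K : Type*) [Field K] [NumberField K] (hK : Module.finrank ℚ K = 2) (ψ : K →+* ℂ)
    (γ : K) (hγ : (ψ γ).im ≠ 0) (α : 𝓞 K) :
    (Ideal.absNorm (Ideal.span {α}) : ℝ) = ‖ψ (α : K)‖ ^ 2 := by
  classical
  set w := InfinitePlace.mk ψ
  have hw : w.IsComplex := by
    rw [InfinitePlace.isComplex_mk_iff, ComplexEmbedding.isReal_iff]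
    intro h
    have h1 := RingHom.congr_fun h γ
    rw [ComplexEmbedding.conjugate_coe_eq, Complex.conj_eq_iff_im] at h1
    exact hγ h1
  have h1 := InfinitePlace.card_add_two_mul_card_eq_rank K
  have h2 : 0 < InfinitePlace.nrComplexPlaces K := Fintype.card_pos_iff.2 ⟨⟨w, hw⟩⟩
  have h3 : Fintype.card (InfinitePlace K) = 1 := by
    rw [InfinitePlace.card_eq_nrRealPlaces_add_nrComplexPlaces]
    omega
  have h4 : (Finset.univ : Finset (InfinitePlace K)) = {w} := by
    rw [Fintype.card_eq_one_iff] at h3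
    obtain ⟨x, hx⟩ := h3
    ext y
    simp [hx y, hx w]
  have h5 := InfinitePlace.prod_eq_abs_norm (α : K)
  rw [h4, Finset.prod_singleton, hw.mult_eq_two] at h5
  rw [Ideal.absNorm_span_singleton]
  have h6 : w (α : K) = ‖ψ (α : K)‖ := rfl
  rw [← h6, h5, ← Algebra.coe_norm_int]
  simp [Nat.cast_natAbs]

theorem form_prime' {a b c : ℤ} (ha : 0 < a) (hdisc : b ^ 2 - 4 * a * c < 0) {M : ℕ} (hM3 : 3 ≤ M)
    (hMD : (4 * a * c - b ^ 2) ∣ (M : ℤ)) (hcop : IsCoprime a (M : ℤ)) :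
    ∃ p : ℕ, p.Prime ∧ ∃ x y : ℤ, a * x ^ 2 + b * x * y + c * y ^ 2 = p := by
  have hD : (0 : ℝ) < 4 * a * c - b ^ 2 := by
    have : 0 < 4 * a * c - b ^ 2 := by linarith
    exact_mod_cast this
  set s : ℝ := √(4 * a * c - b ^ 2) with hsdef
  have hs0 : 0 < s := Real.sqrt_pos.2 hD
  have hs : s ^ 2 = 4 * a * c - b ^ 2 := Real.sq_sqrt hD.le
  let t : ℂ := ⟨-b / 2, s / 2⟩
  have ht : t ^ 2 + b * t + a * c = 0 := by
    apply Complex.ext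
    · simp [t, pow_two]
      linear_combination (-1/4) * hs
    · simp [t, pow_two]
      ring
  let q : Polynomial ℤ := Polynomial.X ^ 2 + Polynomial.C b * Polynomial.X + Polynomial.C (a * c)
  have hq : q.Monic := by
    simp only [q]; monicity!
  have hqt : Polynomial.aeval t q = 0 := by
    simp [q]
    linear_combination ht
  have htZ : IsIntegral ℤ t := ⟨q, hq, hqt⟩
  have htQ : IsIntegral ℚ t := htZ.tower_top
  let K := IntermediateField.adjoin ℚ {t}
  have : FiniteDimensional ℚ K := IntermediateField.adjoin.finiteDimensional htQ
  have : NumberField K := ⟨⟩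
  have hqdeg : q.natDegree = 2 := by
    simp only [q]; compute_degree!
  have hK : Module.finrank ℚ K = 2 := by
    rw [IntermediateField.adjoin.finrank htQ]
    apply le_antisymm
    · have h1 : (minpoly ℚ t).natDegree ≤ (q.map (algebraMap ℤ ℚ)).natDegree := by
        apply Polynomial.natDegree_le_of_dvd
        · apply minpoly.dvd
          rw [Polynomial.aeval_map_algebraMap, hqt]
        · exact (hq.map _).ne_zero
      rwa [hq.natDegree_map, hqdeg] at h1
    · rw [minpoly.two_le_natDegree_iff htQ]
      rintro ⟨x, hx⟩
      have := congrArg Complex.im hx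
      simp [t] at this
      exact (half_pos hs0).ne this
  let tK : K := IntermediateField.AdjoinSimple.gen ℚ t
  have htK : (tK : ℂ) = t := IntermediateField.AdjoinSimple.coe_gen ℚ t
  have htKi : IsIntegral ℤ tK := by
    have := (isIntegral_algebraMap_iff (R := ℤ) (algebraMap K ℂ).injective (x := tK)).1
    exact this (by rw [show algebraMap K ℂ tK = t from htK]; exact htZ)
  let τ : 𝓞 K := ⟨tK, htKi⟩
  let ψ : K →+* ℂ := algebraMap K ℂ
  let φ : 𝓞 K →+* ℂ := ψ.comp (algebraMap (𝓞 K) K)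
  have hφ : φ τ = t := htK
  have hN := quad_norm K hK ψ tK (by rw [show ψ tK = t from htK]; exact (half_pos hs0).ne')
  exact form_prime (O := 𝓞 K) φ hN (by rw [RingOfIntegers.rank, hK]) ha hM3 hMD hcop hs0 hs
    (τ := τ) (by rw [hφ]) (by rw [hφ])

end QuadField
end FileP4c

/-- A primitive positive definite integral binary quadratic form represents some
prime number. -/
theorem exists_prime_represented (a b c : ℤ)
    (hprim : Int.gcd a (Int.gcd b c) = 1) (ha : 0 < a)
    (hdisc : b ^ 2 - 4 * a * c < 0) :
    ∃ p : ℕ, p.Prime ∧ ∃ x y : ℤ, a * x ^ 2 + b * x * y + c * y ^ 2 = (p : ℤ) := by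
  have hD : 0 < 4 * a * c - b ^ 2 := by linarith
  obtain ⟨d, hd⟩ := Int.eq_ofNat_of_zero_le hD.le
  have hd0 : 0 < d := by
    have : (0 : ℤ) < d := by rw [← hd]; exact hD
    exact_mod_cast this
  obtain ⟨a', b', c', ha', hdisc', hcop, hrep⟩ := form_red a b c hprim ha hdisc (3 * d) (by omega)
  obtain ⟨p, hp, x, y, hxy⟩ := form_prime' (a := a') (b := b') (c := c') ha' (by rw [hdisc']; exact hdisc)
    (M := 3 * d) (by omega) (by
      have : 4 * a' * c' - b' ^ 2 = d := by rw [← hd]; linarith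
      rw [this]
      push_cast
      exact Dvd.intro_left _ rfl) hcop
  obtain ⟨x', y', h⟩ := hrep x y
  exact ⟨p, hp, x', y', h.trans hxy⟩
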